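/- arXiv:0909.4250 — 2 statements merged into one kernel-verified Lean document; each statement's English description precedes it below -/
import Mathlib

section
/- Let p ∈ ℕ, let f ∈ Ω_w(A*, p) ∪ Ω(A*, p), and let f* be defined by f*(I) = sup_{m,n ≥ 0} f_{m,n}(I). Let (η_n)_{n=1}^∞ be Borel probability measures on A^ℕ with η_n(I) = f(I) for all I ∈ A^n, and set μ_n = (1/n) Σ_{i=0}^{n−1} η_n ∘ σ^{−i}. Suppose μ_{n_i} converges weakly to μ for some subsequence (n_i). Then μ is σ-invariant and: (i) there is C_1 > 0 with C_1 f*(I) ≤ μ([I]) ≤ f*(I) for all I ∈ A*; (ii) there is C_2 > 0 with liminf_{n→∞} Σ_{i=0}^p μ(A ∩ σ^{−n−i}(B)) ≥ C_2 μ(A)μ(B) for all Borel A, B ⊆ A^ℕ; (iii) μ is ergodic; (iv) μ is the unique ergodic σ-invariant measure on A^ℕ for which there exists C_3 > 0 with μ([I]) ≥ C_3 f(I) for all I ∈ A*; (v) the full sequence (1/n) Σ_{i=0}^{n−1} η_n ∘ σ^{−i} converges weakly to μ as n → ∞; and (vi) if moreover f ∈ Ω(A*, p), there is C_4 > 0 with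 liminf_{n→∞} μ(A ∩ σ^{−n}(B)) ≥ C_4 μ(A)μ(B) for all Borel A, B ⊆ A^ℕ. -/
open MeasureTheory Filter Topology
open scoped Classical ENNReal NNReal

noncomputable section

/-- The left shift on one-sided sequences. -/
def shiftMap {A : Type} : (ℕ → A) → (ℕ → A) := fun x n => x (n + 1)

/-- The cylinder set of a finite word. -/
def cyl {A : Type} (I : List A) : Set (ℕ → A) :=
  {x | ∀ i : Fin I.length, x i = I.get i}

/-- Membership of a word in the language of `X`. -/
def Lang {A : Type} (X : Set (ℕ → A)) (I : List A) : Prop :=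
  (cyl I ∩ X).Nonempty

/-- `X` is a (nonempty) one-sided subshift. -/
def IsSubshift {A : Type} [TopologicalSpace A] (X : Set (ℕ → A)) : Prop :=
  X.Nonempty ∧ IsCompact X ∧ shiftMap '' X ⊆ X

/-- weak `p`-specification -/
def WeakSpecification {A : Type} (X : Set (ℕ → A)) (p : ℕ) : Prop :=
  ∀ I J : List A, Lang X I → Lang X J →
    ∃ K : List A, K.length ≤ p ∧ Lang X (I ++ K ++ J)

/-- `p`-specification -/
def Specification {A : Type} (X : Set (ℕ → A)) (p : ℕ) : Prop :=
  ∀ I J : List A, Lang X I → Lang X J →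
    ∃ K : List A, K.length = p ∧ Lang X (I ++ K ++ J)

/-- invariant probability measures supported on `X` (predicate on plain measures) -/
def InvOn {A : Type} [MeasurableSpace A] (X : Set (ℕ → A)) (μ : Measure (ℕ → A)) : Prop :=
  IsProbabilityMeasure μ ∧ μ.map shiftMap = μ ∧ μ X = 1

/-- the set of shift-invariant probability measures on `X` -/
def MInv {A : Type} [MeasurableSpace A] (X : Set (ℕ → A)) :
    Set (ProbabilityMeasure (ℕ → A)) :=
  {μ | (μ : Measure (ℕ → A)).map shiftMap = (μ : Measure (ℕ → A)) ∧
    (μ : Measure (ℕ → A)) X = 1}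

/-- measure of a word: `μ([I] ∩ X)` -/
def mw {A : Type} [MeasurableSpace A] (X : Set (ℕ → A)) (μ : Measure (ℕ → A))
    (I : List A) : ℝ :=
  (μ (cyl I ∩ X)).toReal

/-- the initial word of length `n` of a sequence -/
def wordOf {A : Type} (x : ℕ → A) (n : ℕ) : List A := List.ofFn (fun i : Fin n => x i)

/-- `n`-block entropy -/
def Hblock {A : Type} [Fintype A] [MeasurableSpace A] (X : Set (ℕ → A))
    (μ : Measure (ℕ → A)) (n : ℕ) : ℝ :=
  -∑ w : Fin n → A, mw X μ (List.ofFn w) * Real.log (mw X μ (List.ofFn w))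

/-- measure-theoretic entropy (the limit exists for invariant measures; `liminf` realizes it) -/
def ent {A : Type} [Fintype A] [MeasurableSpace A] (X : Set (ℕ → A))
    (μ : Measure (ℕ → A)) : ℝ :=
  liminf (fun n : ℕ => Hblock X μ n / n) atTop

/-- extended logarithm: `log t`, with value `⊥` for `t ≤ 0` -/
def elog (t : ℝ) : EReal := if t ≤ 0 then ⊥ else ((Real.log t : ℝ) : EReal)

/-- the integral `∫ log g dμ`, valued in `ℝ ∪ {−∞}` -/
def intlog {Ω : Type*} [MeasurableSpace Ω] (μ : Measure Ω) (g : Ω → ℝ) : EReal :=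
  ((∫⁻ x, ENNReal.ofReal (Real.log (g x)) ∂μ : ℝ≥0∞) : EReal) -
    ((∫⁻ x, (if g x ≤ 0 then (⊤ : ℝ≥0∞) else ENNReal.ofReal (-Real.log (g x))) ∂μ : ℝ≥0∞) : EReal)

/-- sub-additive potential `Φ = (log φ_n)_{n ≥ 1}` -/
def SubaddPot {A : Type} [TopologicalSpace A] (X : Set (ℕ → A))
    (φ : ℕ → (ℕ → A) → ℝ) : Prop :=
  (∀ n, 1 ≤ n → ContinuousOn (φ n) X) ∧
  (∀ n, 1 ≤ n → ∀ x ∈ X, 0 ≤ φ n x) ∧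
  ∃ c > (0:ℝ), ∀ n m : ℕ, 1 ≤ n → 1 ≤ m → ∀ x ∈ X,
    φ (n + m) x ≤ c * φ n x * φ m (shiftMap^[n] x)

/-- `Φ_*(μ) = lim (1/n) ∫ log φ_n dμ` (realized as a `liminf` in `EReal`) -/
def PhiStar {A : Type} [MeasurableSpace A] (μ : Measure (ℕ → A))
    (φ : ℕ → (ℕ → A) → ℝ) : EReal :=
  liminf (fun n : ℕ => (((n : ℝ)⁻¹ : ℝ) : EReal) * intlog μ (φ n)) atTop

/-- sub-multiplicative function on the language of `X` -/
def Submult {A : Type} (X : Set (ℕ → A)) (φ : List A → ℝ) : Prop :=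
  (∀ I, Lang X I → 0 ≤ φ I) ∧ φ [] = 1 ∧
  ∃ c > (0:ℝ), ∀ I J : List A, Lang X (I ++ J) → φ (I ++ J) ≤ c⁻¹ * φ I * φ J

/-- the potential generated by a word function -/
def genPot {A : Type} (φ : List A → ℝ) : ℕ → (ℕ → A) → ℝ := fun n x => φ (wordOf x n)

/-- the scaled potential `cΦ = (log φ_n^c)` -/
def scPot {Ω : Type*} (c : ℝ) (φ : ℕ → Ω → ℝ) : ℕ → Ω → ℝ := fun n x => φ n x ^ c

/-- the "pressure value" `Φ_*(μ) + h_μ` -/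
def eqVal {A : Type} [Fintype A] [MeasurableSpace A] (X : Set (ℕ → A))
    (φ : ℕ → (ℕ → A) → ℝ) (μ : ProbabilityMeasure (ℕ → A)) : EReal :=
  PhiStar (μ : Measure (ℕ → A)) φ + ((ent X (μ : Measure (ℕ → A)) : ℝ) : EReal)

/-- the set of equilibrium states of `Φ` -/
def EqSet {A : Type} [Fintype A] [MeasurableSpace A] (X : Set (ℕ → A))
    (φ : ℕ → (ℕ → A) → ℝ) : Set (ProbabilityMeasure (ℕ → A)) :=
  {μ | μ ∈ MInv X ∧ eqVal X φ μ = ⨆ η ∈ MInv X, eqVal X φ η}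

/-- sequence map induced by a one-block map -/
def blockMap {A B : Type} (π : A → B) : (ℕ → A) → (ℕ → B) := fun x n => π (x n)

/-- pushforward of a probability measure under a one-block map -/
def pushM {A B : Type} [MeasurableSpace A] [MeasurableSpace B] (π : A → B)
    (μ : ProbabilityMeasure (ℕ → A)) : Measure (ℕ → B) :=
  (μ : Measure (ℕ → A)).map (blockMap π)

/-- conditional equilibrium states of `Φ` over `ν` -/
def CondEqSet {A B : Type} [Fintype A] [MeasurableSpace A] [MeasurableSpace B]
    (X : Set (ℕ → A)) (π : A → B) (φ : ℕ → (ℕ → A) → ℝ) (ν : Measure (ℕ → B)) :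
    Set (ProbabilityMeasure (ℕ → A)) :=
  {μ | μ ∈ MInv X ∧ pushM π μ = ν ∧
    eqVal X φ μ = ⨆ η ∈ {η | η ∈ MInv X ∧ pushM π η = ν}, eqVal X φ η}

/-- the projected word function `ψ(J) = Σ_{I : πI = J} φ(I)` -/
def psiProj {A B : Type} [Fintype A] (X : Set (ℕ → A)) (π : A → B) (φ : List A → ℝ)
    (J : List B) : ℝ :=
  ∑ w : Fin J.length → A,
    if Lang X (List.ofFn w) ∧ List.map π (List.ofFn w) = J then φ (List.ofFn w) else 0

/-- `φ^{(2)}(J) = (Σ_{I : πI = J} φ(I)^{1/a₁})^{a₁}` -/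
def phiTwo {A B : Type} [Fintype A] (X : Set (ℕ → A)) (π : A → B) (φ : List A → ℝ)
    (a₁ : ℝ) (J : List B) : ℝ :=
  (∑ w : Fin J.length → A,
    if Lang X (List.ofFn w) ∧ List.map π (List.ofFn w) = J
    then φ (List.ofFn w) ^ a₁⁻¹ else 0) ^ a₁

/-- `a`-weighted pressure value for `k = 2` -/
def wVal2 {A B : Type} [Fintype A] [Fintype B] [MeasurableSpace A] [MeasurableSpace B]
    (X : Set (ℕ → A)) (Y : Set (ℕ → B)) (π : A → B) (φ : ℕ → (ℕ → A) → ℝ)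
    (a₁ a₂ : ℝ) (μ : ProbabilityMeasure (ℕ → A)) : EReal :=
  PhiStar (μ : Measure (ℕ → A)) φ +
    ((a₁ * ent X (μ : Measure (ℕ → A)) + a₂ * ent Y (pushM π μ) : ℝ) : EReal)

/-- the set of `a`-weighted equilibrium states, `k = 2` -/
def WEqSet2 {A B : Type} [Fintype A] [Fintype B] [MeasurableSpace A] [MeasurableSpace B]
    (X : Set (ℕ → A)) (Y : Set (ℕ → B)) (π : A → B) (φ : ℕ → (ℕ → A) → ℝ)
    (a₁ a₂ : ℝ) : Set (ProbabilityMeasure (ℕ → A)) :=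
  {μ | μ ∈ MInv X ∧ wVal2 X Y π φ a₁ a₂ μ = ⨆ η ∈ MInv X, wVal2 X Y π φ a₁ a₂ η}

/-- convexity of a set of probability measures -/
def ConvexPM {Ω : Type*} [MeasurableSpace Ω] (S : Set (ProbabilityMeasure Ω)) : Prop :=
  ∀ μ₁ ∈ S, ∀ μ₂ ∈ S, ∀ t : ℝ, 0 ≤ t → t ≤ 1 → ∀ μ : ProbabilityMeasure Ω,
    (μ : Measure Ω) = ENNReal.ofReal t • (μ₁ : Measure Ω) +
      ENNReal.ofReal (1 - t) • (μ₂ : Measure Ω) → μ ∈ S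

/-- extreme points of a set of probability measures -/
def IsExtremePM {Ω : Type*} [MeasurableSpace Ω] (S : Set (ProbabilityMeasure Ω))
    (μ : ProbabilityMeasure Ω) : Prop :=
  μ ∈ S ∧ ∀ μ₁ ∈ S, ∀ μ₂ ∈ S, ∀ t : ℝ, 0 < t → t < 1 →
    (μ : Measure Ω) = ENNReal.ofReal t • (μ₁ : Measure Ω) +
      ENNReal.ofReal (1 - t) • (μ₂ : Measure Ω) → μ₁ = μ₂

/-- the class `Ω_w(A*, p)` -/
def OmegaW {A : Type} [Fintype A] (p : ℕ) (f : List A → ℝ) : Prop :=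
  (∀ I, 0 ≤ f I ∧ f I ≤ 1) ∧
  ∃ c > (0:ℝ),
    (∀ n : ℕ, ∑ w : Fin n → A, f (List.ofFn w) = 1) ∧
    (∀ I J : List A, ∃ K : List A, K.length ≤ p ∧ c * (f I * f J) ≤ f (I ++ K ++ J)) ∧
    (∀ I : List A, ∃ i j : A, c * f I ≤ f (i :: I) ∧ c * f I ≤ f (I ++ [j]))

/-- the class `Ω(A*, p)` -/
def OmegaS {A : Type} [Fintype A] (p : ℕ) (f : List A → ℝ) : Prop :=
  (∀ I, 0 ≤ f I ∧ f I ≤ 1) ∧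
  ∃ c > (0:ℝ),
    (∀ n : ℕ, ∑ w : Fin n → A, f (List.ofFn w) = 1) ∧
    (∀ I J : List A, ∃ K : List A, K.length = p ∧ c * (f I * f J) ≤ f (I ++ K ++ J))

/-- `f_{m,n}(I)` -/
def fmn {A : Type} [Fintype A] (f : List A → ℝ) (m n : ℕ) (I : List A) : ℝ :=
  ∑ u : Fin m → A, ∑ v : Fin n → A, f (List.ofFn u ++ I ++ List.ofFn v)

/-- `f*(I) = sup_{m,n} f_{m,n}(I)` -/
def fstar {A : Type} [Fintype A] (f : List A → ℝ) (I : List A) : ℝ :=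
  ⨆ m : ℕ, ⨆ n : ℕ, fmn f m n I

/-- the class `D_w(X, p)` -/
def Dw {A : Type} (X : Set (ℕ → A)) (p : ℕ) (φ : List A → ℝ) : Prop :=
  (∀ I, Lang X I → 0 ≤ φ I) ∧ (∃ I, Lang X I ∧ I ≠ [] ∧ 0 < φ I) ∧
  ∃ c : ℝ, 0 < c ∧ c ≤ 1 ∧
    (∀ I J : List A, Lang X (I ++ J) → φ (I ++ J) ≤ c⁻¹ * φ I * φ J) ∧
    (∀ I J : List A, Lang X I → Lang X J →
      ∃ K : List A, K.length ≤ p ∧ Lang X (I ++ K ++ J) ∧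
        c * (φ I * φ J) ≤ φ (I ++ K ++ J))

/-- the class `D(X, p)` -/
def Ds {A : Type} (X : Set (ℕ → A)) (p : ℕ) (φ : List A → ℝ) : Prop :=
  (∀ I, Lang X I → 0 ≤ φ I) ∧ (∃ I, Lang X I ∧ I ≠ [] ∧ 0 < φ I) ∧
  ∃ c : ℝ, 0 < c ∧ c ≤ 1 ∧
    (∀ I J : List A, Lang X (I ++ J) → φ (I ++ J) ≤ c⁻¹ * φ I * φ J) ∧
    (∀ I J : List A, Lang X I → Lang X J →
      ∃ K : List A, K.length = p ∧ Lang X (I ++ K ++ J) ∧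
        c * (φ I * φ J) ≤ φ (I ++ K ++ J))

end

noncomputable section

/-- iterated one-block maps along a chain of alphabets: `tauFrom π j i : B j → B (j+i)` -/
def tauFrom {B : ℕ → Type} (π : ∀ i, B i → B (i+1)) (j : ℕ) : (i : ℕ) → B j → B (j + i)
  | 0 => id
  | (i+1) => fun a => π (j + i) (tauFrom π j i a)

/-- weighted pressure value along a chain starting at index `j`, with `k` weights `w 0, …, w (k-1)` -/
def wValGen {B : ℕ → Type} [∀ i, Fintype (B i)] [∀ i, MeasurableSpace (B i)]
    (π : ∀ i, B i → B (i+1)) (X : ∀ i, Set (ℕ → B i)) (j k : ℕ) (w : ℕ → ℝ)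
    (φ : ℕ → (ℕ → B j) → ℝ) (μ : ProbabilityMeasure (ℕ → B j)) : EReal :=
  PhiStar (μ : Measure (ℕ → B j)) φ +
    ((∑ i ∈ Finset.range k, w i *
      ent (X (j + i)) ((μ : Measure (ℕ → B j)).map (blockMap (tauFrom π j i))) : ℝ) : EReal)

/-- weighted equilibrium states along a chain -/
def wEqSetGen {B : ℕ → Type} [∀ i, Fintype (B i)] [∀ i, MeasurableSpace (B i)]
    (π : ∀ i, B i → B (i+1)) (X : ∀ i, Set (ℕ → B i)) (j k : ℕ) (w : ℕ → ℝ)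
    (φ : ℕ → (ℕ → B j) → ℝ) : Set (ProbabilityMeasure (ℕ → B j)) :=
  {μ | μ ∈ MInv (X j) ∧
    wValGen π X j k w φ μ = ⨆ η ∈ MInv (X j), wValGen π X j k w φ η}

end

/-!
Padding a word on either side by at least `p` letters loses at most a constant factor of its
`f`-weight, so the `f_{m,n}(I)` are nondecreasing in `(m, n)` up to a constant. As
`η_N (σ^{-i} [I]) = f_{i,N-i-|I|}(I)`, every weak limit of the averages therefore gives `[I]` a
mass comparable with `f*(I)`. Choosing `f_{m,n}(I)` and `f_{q,r}(J)` comparable with these masses,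
the gap property (H2) or (A2) bounds the correlations of `[I]` and `[J]` from below;
approximating Borel sets by finite unions of cylinders gives the mixing inequality, which
applied to an invariant set and its complement yields ergodicity.

An invariant measure dominating a multiple of `f` dominates a multiple of all `f_{m,n}`, hence
of any weak limit `μ` of the averages; if it is ergodic, then the absolutely continuous `μ`
equals it. Two weak limits therefore coincide, and by compactness the full sequence of averages
converges.
-/

section WordSums

variable {A : Type*} [Fintype A] {m n : ℕ} {g h : List A → ℝ}

/-- The sum of `g` over all words of length `n`. -/
noncomputable def wordSum (n : ℕ) (g : List A → ℝ) : ℝ := ∑ w : Fin n → A, g (List.ofFn w)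

@[simp]
lemma wordSum_zero (g : List A → ℝ) : wordSum 0 g = g [] := by simp [wordSum]

lemma wordSum_add (m n : ℕ) (g : List A → ℝ) :
    wordSum (m + n) g = wordSum m fun u => wordSum n fun v => g (u ++ v) := by
  simp only [wordSum]
  rw [← Fintype.sum_prod_type', ← (Fin.appendEquiv m n).sum_comp]
  refine Finset.sum_congr rfl fun x _ => ?_
  rw [← List.ofFn_fin_append]
  rfl

lemma wordSum_mono (H : ∀ w, w.length = n → g w ≤ h w) : wordSum n g ≤ wordSum n h :=
  Finset.sum_le_sum fun _ _ => H _ List.length_ofFn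

lemma wordSum_congr (H : ∀ w, w.length = n → g w = h w) : wordSum n g = wordSum n h :=
  Finset.sum_congr rfl fun _ _ => H _ List.length_ofFn

lemma wordSum_nonneg (hg : ∀ w, 0 ≤ g w) : 0 ≤ wordSum n g :=
  Finset.sum_nonneg fun _ _ => hg _

lemma mul_wordSum (n : ℕ) (g : List A → ℝ) (c : ℝ) :
    c * wordSum n g = wordSum n fun w => c * g w :=
  Finset.mul_sum ..

lemma wordSum_mul (n : ℕ) (g : List A → ℝ) (c : ℝ) :
    wordSum n g * c = wordSum n fun w => g w * c :=
  Finset.sum_mul ..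

lemma wordSum_comm (m n : ℕ) (g : List A → List A → ℝ) :
    (wordSum m fun u => wordSum n fun v => g u v) = wordSum n fun v => wordSum m fun u => g u v :=
  Finset.sum_comm

lemma wordSum_finsetSum (n : ℕ) (F : Finset ℕ) (g : ℕ → List A → ℝ) :
    (wordSum n fun w => ∑ i ∈ F, g i w) = ∑ i ∈ F, wordSum n (g i) :=
  Finset.sum_comm

lemma le_wordSum (hg : ∀ w, 0 ≤ g w) (K : List A) : g K ≤ wordSum K.length g := by
  simpa only [wordSum, List.ofFn_get] using Finset.single_le_sum (f := fun w => g (List.ofFn w))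
    (fun w _ => hg _) (Finset.mem_univ K.get)

lemma wordSum_reverse (n : ℕ) (g : List A → ℝ) :
    (wordSum n fun w => g w.reverse) = wordSum n g := by
  rw [wordSum, ← (Fin.revPerm.arrowCongr (Equiv.refl A)).sum_comp]
  refine Finset.sum_congr rfl fun w _ => congrArg g <| List.ext_getElem (by simp) fun i _ hi => ?_
  have hin : i < n := by simpa using hi
  simp [Fin.rev, show n - (n - 1 - i + 1) = i by omega]

end WordSums

section TwoSidedSums

variable {A : Type} [Fintype A] {f : List A → ℝ}

lemma fmn_eq_wordSum (f : List A → ℝ) (m n : ℕ) (I : List A) :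
    fmn f m n I = wordSum m fun u => wordSum n fun v => f (u ++ I ++ v) :=
  rfl

@[simp]
lemma fmn_zero_zero (f : List A → ℝ) (I : List A) : fmn f 0 0 I = f I := by
  simp only [fmn_eq_wordSum, wordSum_zero, List.nil_append, List.append_nil]

lemma fmn_nonneg (hf : ∀ I, 0 ≤ f I) (m n : ℕ) (I : List A) : 0 ≤ fmn f m n I :=
  Finset.sum_nonneg fun _ _ => Finset.sum_nonneg fun _ _ => hf _

lemma fmn_comp_reverse (f : List A → ℝ) (m n : ℕ) (I : List A) :
    fmn (fun W => f W.reverse) n m I.reverse = fmn f m n I := by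
  simp only [fmn_eq_wordSum, List.reverse_append, List.reverse_reverse, ← List.append_assoc]
  rw [wordSum_comm, wordSum_reverse m fun u => wordSum n fun v => f (u ++ I ++ v.reverse)]
  exact wordSum_congr fun u _ => wordSum_reverse n fun v => f (u ++ I ++ v)

lemma mul_fstar_le {I : List A} {C t : ℝ} (hC : 0 ≤ C) (h : ∀ m n, C * fmn f m n I ≤ t) :
    C * fstar f I ≤ t := by
  rw [fstar, Real.mul_iSup_of_nonneg hC]
  refine ciSup_le fun m => ?_
  rw [Real.mul_iSup_of_nonneg hC]
  exact ciSup_le (h m)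

end TwoSidedSums

section GapSupermultiplicativity

variable {A : Type*} [Fintype A] {F G : Finset ℕ} {a b : ℕ} {c D : ℝ} {f : List A → ℝ}

/-- Supermultiplicativity of `f` up to the factor `c` and up to inserting a word whose length lies
in `F`. Summing over the inserted word, instead of asking for one good word as in (H2) and (A2),
lets the inequality be summed over `I` and `J`. -/
def GapSupermul (F : Finset ℕ) (c : ℝ) (f : List A → ℝ) : Prop :=
  ∀ I J, c * (f I * f J) ≤ ∑ i ∈ F, wordSum i fun K => f (I ++ K ++ J)

/-- Prepending all words of length `a` to a word loses at most the factor `D` of its weight. -/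
def LeftExtends (D : ℝ) (a : ℕ) (f : List A → ℝ) : Prop :=
  ∀ W, D * f W ≤ wordSum a fun L => f (L ++ W)

lemma GapSupermul.of_exists (hf : ∀ I, 0 ≤ f I)
    (h : ∀ I J, ∃ K : List A, K.length ∈ F ∧ c * (f I * f J) ≤ f (I ++ K ++ J)) :
    GapSupermul F c f := by
  intro I J
  obtain ⟨K, hK, hle⟩ := h I J
  calc c * (f I * f J) ≤ f (I ++ K ++ J) := hle
    _ ≤ wordSum K.length fun K => f (I ++ K ++ J) :=
        le_wordSum (g := fun K => f (I ++ K ++ J)) (fun _ => hf _) K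
    _ ≤ ∑ i ∈ F, wordSum i fun K => f (I ++ K ++ J) :=
        Finset.single_le_sum (f := fun i => wordSum i fun K => f (I ++ K ++ J))
          (fun i _ => wordSum_nonneg fun _ => hf _) hK

lemma GapSupermul.mono (h : GapSupermul F c f) (hf : ∀ I, 0 ≤ f I) (hFG : F ⊆ G) :
    GapSupermul G c f := fun I J =>
  (h I J).trans <| Finset.sum_le_sum_of_subset_of_nonneg hFG fun _ _ _ =>
    wordSum_nonneg fun _ => hf _

lemma GapSupermul.mul_le_sum_wordSum (h : GapSupermul F c f) (hb : wordSum b f = 1) (W : List A) :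
    c * f W ≤ ∑ i ∈ F, wordSum (b + i) fun L => f (L ++ W) := by
  calc c * f W = wordSum b fun J => c * (f J * f W) := by
        rw [← mul_wordSum, ← wordSum_mul, hb, one_mul]
    _ ≤ wordSum b fun J => ∑ i ∈ F, wordSum i fun K => f (J ++ K ++ W) :=
        wordSum_mono fun J _ => h J W
    _ = ∑ i ∈ F, wordSum (b + i) fun L => f (L ++ W) := by
        simp only [wordSum_finsetSum, wordSum_add]

lemma LeftExtends.mul_wordSum_le (h : LeftExtends D a f) (m : ℕ) (W : List A) :
    (D * wordSum m fun L => f (L ++ W)) ≤ wordSum (a + m) fun L => f (L ++ W) := by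
  rw [mul_wordSum, wordSum_add, wordSum_comm]
  exact wordSum_mono fun L _ => by simpa only [List.append_assoc] using h (L ++ W)

lemma LeftExtends.pow (h : LeftExtends D 1 f) (hD : 0 ≤ D) (k : ℕ) : LeftExtends (D ^ k) k f := by
  induction k with
  | zero => intro W; simp
  | succ k ih =>
    intro W
    calc D ^ (k + 1) * f W = D * (D ^ k * f W) := by ring
      _ ≤ D * wordSum k fun L => f (L ++ W) := mul_le_mul_of_nonneg_left (ih W) hD
      _ ≤ wordSum (k + 1) fun L => f (L ++ W) := by
          rw [add_comm k 1]
          exact h.mul_wordSum_le k W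

end GapSupermultiplicativity

section OmegaClasses

variable {A : Type} [Fintype A] {p : ℕ} {f : List A → ℝ}

lemma OmegaW.nonneg (hf : OmegaW p f) (I : List A) : 0 ≤ f I := (hf.1 I).1

lemma OmegaS.nonneg (hf : OmegaS p f) (I : List A) : 0 ≤ f I := (hf.1 I).1

lemma OmegaW.reverse (hf : OmegaW p f) : OmegaW p fun I => f I.reverse := by
  obtain ⟨h01, c, hc, hsum, hgap, hext⟩ := hf
  refine ⟨fun I => h01 _, c, hc, fun n => (wordSum_reverse n f).trans (hsum n), fun I J => ?_,
    fun I => ?_⟩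
  · obtain ⟨K, hK, hle⟩ := hgap J.reverse I.reverse
    exact ⟨K.reverse, by simpa using hK, by simpa [mul_comm (f I.reverse)] using hle⟩
  · obtain ⟨i, j, hi, hj⟩ := hext I.reverse
    exact ⟨j, i, by simpa using hj, by simpa using hi⟩

lemma OmegaS.reverse (hf : OmegaS p f) : OmegaS p fun I => f I.reverse := by
  obtain ⟨h01, c, hc, hsum, hgap⟩ := hf
  refine ⟨fun I => h01 _, c, hc, fun n => (wordSum_reverse n f).trans (hsum n), fun I J => ?_⟩
  obtain ⟨K, hK, hle⟩ := hgap J.reverse I.reverse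
  exact ⟨K.reverse, by simpa using hK, by simpa [mul_comm (f I.reverse)] using hle⟩

lemma OmegaW.exists_gapSupermul (hf : OmegaW p f) :
    ∃ c > 0, GapSupermul (Finset.range (p + 1)) c f := by
  obtain ⟨-, c, hc, -, hgap, -⟩ := id hf
  refine ⟨c, hc, .of_exists hf.nonneg fun I J => ?_⟩
  obtain ⟨K, hK, hle⟩ := hgap I J
  exact ⟨K, Finset.mem_range_succ_iff.2 hK, hle⟩

lemma OmegaS.exists_gapSupermul (hf : OmegaS p f) : ∃ c > 0, GapSupermul {p} c f := by
  obtain ⟨-, c, hc, -, hgap⟩ := id hf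
  refine ⟨c, hc, .of_exists hf.nonneg fun I J => ?_⟩
  obtain ⟨K, hK, hle⟩ := hgap I J
  exact ⟨K, Finset.mem_singleton.2 hK, hle⟩

lemma exists_gapSupermul (hf : OmegaW p f ∨ OmegaS p f) :
    ∃ c > 0, GapSupermul (Finset.range (p + 1)) c f := by
  refine hf.elim OmegaW.exists_gapSupermul fun hS => ?_
  obtain ⟨c, hc, hgap⟩ := hS.exists_gapSupermul
  exact ⟨c, hc, hgap.mono hS.nonneg (by simp)⟩

lemma OmegaS.exists_leftExtends (hf : OmegaS p f) :
    ∃ D > 0, ∀ a, p ≤ a → LeftExtends D a f := by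
  obtain ⟨-, -, -, hsum, -⟩ := id hf
  obtain ⟨c, hc, hgap⟩ := hf.exists_gapSupermul
  refine ⟨c, hc, fun a ha W => ?_⟩
  simpa [Nat.sub_add_cancel ha] using hgap.mul_le_sum_wordSum (hsum (a - p)) W

lemma OmegaW.exists_leftExtends_one (hf : OmegaW p f) :
    ∃ d : ℝ, 0 < d ∧ d ≤ 1 ∧ LeftExtends d 1 f := by
  obtain ⟨-, c, hc, -, -, hext⟩ := id hf
  refine ⟨min c 1, by positivity, min_le_right _ _, fun W => ?_⟩
  obtain ⟨i, -, hi, -⟩ := hext W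
  calc min c 1 * f W ≤ c * f W := mul_le_mul_of_nonneg_right (min_le_left _ _) (hf.nonneg W)
    _ ≤ f ([i] ++ W) := hi
    _ ≤ wordSum 1 fun L => f (L ++ W) :=
        le_wordSum (g := fun L => f (L ++ W)) (fun _ => hf.nonneg _) [i]

lemma OmegaW.exists_leftExtends (hf : OmegaW p f) :
    ∃ D > 0, ∀ a, p ≤ a → LeftExtends D a f := by
  obtain ⟨-, -, -, hsum, -⟩ := id hf
  obtain ⟨c, hc, hgap⟩ := hf.exists_gapSupermul
  obtain ⟨d, hd, hd1, hone⟩ := hf.exists_leftExtends_one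
  refine ⟨d ^ p * c / (p + 1), by positivity, fun a ha W => ?_⟩
  have hpad : ∀ i ∈ Finset.range (p + 1),
      (d ^ p * wordSum (a - p + i) fun L => f (L ++ W)) ≤ wordSum a fun L => f (L ++ W) := by
    intro i hi
    have hip : i ≤ p := Finset.mem_range_succ_iff.1 hi
    have hle := (hone.pow hd.le (p - i)).mul_wordSum_le (a - p + i) W
    rw [show p - i + (a - p + i) = a by omega] at hle
    refine (mul_le_mul_of_nonneg_right ?_ (wordSum_nonneg fun _ => hf.nonneg _)).trans hle
    exact pow_le_pow_of_le_one hd.le hd1 (Nat.sub_le p i)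
  rw [div_mul_eq_mul_div, div_le_iff₀ (by positivity)]
  calc d ^ p * c * f W = d ^ p * (c * f W) := by ring
    _ ≤ d ^ p * ∑ i ∈ Finset.range (p + 1), wordSum (a - p + i) fun L => f (L ++ W) := by
        gcongr
        exact hgap.mul_le_sum_wordSum (hsum (a - p)) W
    _ ≤ ∑ i ∈ Finset.range (p + 1), wordSum a fun L => f (L ++ W) := by
        rw [Finset.mul_sum]
        exact Finset.sum_le_sum hpad
    _ = (wordSum a fun L => f (L ++ W)) * (p + 1) := by simp [mul_comm]

end OmegaClasses

section QuasiMonotonicity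

variable {A : Type} [Fintype A] {F : Finset ℕ} {a p : ℕ} {c D : ℝ} {f : List A → ℝ}

/-- `fmn f m n I` is nondecreasing in `(m, n)` up to the factor `E`, provided that both indices
grow by at least `p`. -/
def QuasiMonotone (p : ℕ) (E : ℝ) (f : List A → ℝ) : Prop :=
  ∀ ⦃m n m' n' : ℕ⦄, m + p ≤ m' → n + p ≤ n' → ∀ I, E * fmn f m n I ≤ fmn f m' n' I

lemma LeftExtends.mul_fmn_le (h : LeftExtends D a f) (m n : ℕ) (I : List A) :
    D * fmn f m n I ≤ fmn f (a + m) n I := by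
  simp only [fmn_eq_wordSum]
  rw [wordSum_comm m, wordSum_comm (a + m), mul_wordSum]
  exact wordSum_mono fun v _ => by
    simpa only [List.append_assoc] using h.mul_wordSum_le m (I ++ v)

lemma exists_leftExtends (hf : OmegaW p f ∨ OmegaS p f) :
    ∃ D > 0, ∀ a, p ≤ a → LeftExtends D a f :=
  hf.elim OmegaW.exists_leftExtends OmegaS.exists_leftExtends

lemma exists_quasiMonotone (hf : OmegaW p f ∨ OmegaS p f) : ∃ E > 0, QuasiMonotone p E f := by
  obtain ⟨D, hD, hleft⟩ := exists_leftExtends hf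
  obtain ⟨D', hD', hright⟩ := exists_leftExtends (hf.imp OmegaW.reverse OmegaS.reverse)
  refine ⟨D * D', mul_pos hD hD', fun m n m' n' hm hn I => ?_⟩
  have hn' : D' * fmn f m n I ≤ fmn f m n' I := by
    have h := (hright (n' - n) (by omega)).mul_fmn_le n m I.reverse
    rwa [fmn_comp_reverse, fmn_comp_reverse, Nat.sub_add_cancel (by omega)] at h
  calc D * D' * fmn f m n I = D * (D' * fmn f m n I) := mul_assoc _ _ _
    _ ≤ D * fmn f m n' I := mul_le_mul_of_nonneg_left hn' hD.le
    _ ≤ fmn f m' n' I := by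
        simpa only [Nat.sub_add_cancel (show m ≤ m' by omega)] using
          (hleft (m' - m) (by omega)).mul_fmn_le m n' I

lemma GapSupermul.mul_fmn_le (h : GapSupermul F c f) (m n q r : ℕ) (I J : List A) :
    c * (fmn f m n I * fmn f q r J) ≤
      ∑ i ∈ F, wordSum (n + i + q) fun K => fmn f m r (I ++ K ++ J) := by
  calc c * (fmn f m n I * fmn f q r J)
      = wordSum m fun x => wordSum n fun v => wordSum q fun u => wordSum r fun y =>
          c * (f (x ++ I ++ v) * f (u ++ J ++ y)) := by
        simp only [fmn_eq_wordSum, ← mul_wordSum, ← wordSum_mul]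
    _ ≤ wordSum m fun x => wordSum n fun v => wordSum q fun u => wordSum r fun y =>
          ∑ i ∈ F, wordSum i fun K => f (x ++ I ++ v ++ K ++ (u ++ J ++ y)) :=
        wordSum_mono fun _ _ => wordSum_mono fun _ _ => wordSum_mono fun _ _ =>
          wordSum_mono fun _ _ => h _ _
    _ = ∑ i ∈ F, wordSum (n + i + q) fun K => fmn f m r (I ++ K ++ J) := by
        simp only [wordSum_finsetSum]
        refine Finset.sum_congr rfl fun i _ => ?_
        simp only [fmn_eq_wordSum, wordSum_add, wordSum_comm r i, wordSum_comm q i,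
          wordSum_comm m, List.append_assoc]

end QuasiMonotonicity

section DenseFamilies

open scoped symmDiff

variable {α : Type*} [MeasurableSpace α] {μ ν : Measure α} {𝒜 : Set (Set α)} {T : α → α}
  {S S' R R' : Set α} {F : Finset ℕ} {C : ℝ}

lemma exists_measureReal_symmDiff_lt_of_measureDense [IsFiniteMeasure μ]
    (h𝒜 : μ.MeasureDense 𝒜) (hS : MeasurableSet S) {ε : ℝ} (hε : 0 < ε) :
    ∃ S' ∈ 𝒜, μ.real (S ∆ S') < ε := by
  obtain ⟨S', hS', hlt⟩ := h𝒜.approx S hS (measure_ne_top μ S) ε hε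
  exact ⟨S', hS', (ENNReal.lt_ofReal_iff_toReal_lt (measure_ne_top _ _)).1 hlt⟩

lemma mul_measureReal_le_of_measureDense [IsFiniteMeasure μ] [IsFiniteMeasure ν]
    (h𝒜 : (μ + ν).MeasureDense 𝒜) (h : ∀ S ∈ 𝒜, C * μ.real S ≤ ν.real S)
    (hS : MeasurableSet S) : C * μ.real S ≤ ν.real S := by
  refine le_of_forall_pos_le_add fun ε hε => ?_
  obtain ⟨S', hS', hlt⟩ := exists_measureReal_symmDiff_lt_of_measureDense h𝒜 hS
    (ε := ε / (|C| + 1)) (by positivity)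
  rw [measureReal_add_apply, lt_div_iff₀ (by positivity)] at hlt
  have hm := (h𝒜.measurable S' hS').nullMeasurableSet (μ := μ)
  have hn := (h𝒜.measurable S' hS').nullMeasurableSet (μ := ν)
  have hμ : |μ.real S - μ.real S'| ≤ μ.real (S ∆ S') :=
    abs_measureReal_sub_le_measureReal_symmDiff hS.nullMeasurableSet hm
  have hν : |ν.real S - ν.real S'| ≤ ν.real (S ∆ S') :=
    abs_measureReal_sub_le_measureReal_symmDiff hS.nullMeasurableSet hn
  have hCμ : C * (μ.real S - μ.real S') ≤ |C| * μ.real (S ∆ S') :=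
    (le_abs_self _).trans ((abs_mul _ _).trans_le (mul_le_mul_of_nonneg_left hμ (abs_nonneg C)))
  have hCν : 0 ≤ |C| * ν.real (S ∆ S') := by positivity
  have hμ0 : 0 ≤ μ.real (S ∆ S') := measureReal_nonneg
  linarith [h S' hS', (abs_le.1 hν).1]

lemma abs_measureReal_inter_preimage_sub_le [IsFiniteMeasure μ] (hT : MeasurePreserving T μ μ)
    (hS : MeasurableSet S) (hS' : MeasurableSet S') (hR : MeasurableSet R)
    (hR' : MeasurableSet R') :
    |μ.real (S ∩ T ⁻¹' R) - μ.real (S' ∩ T ⁻¹' R')| ≤ μ.real (S ∆ S') + μ.real (R ∆ R') := by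
  have hsub : (S ∩ T ⁻¹' R) ∆ (S' ∩ T ⁻¹' R') ⊆ S ∆ S' ∪ T ⁻¹' (R ∆ R') := by
    intro x
    simp only [Set.mem_symmDiff, Set.mem_union, Set.mem_inter_iff, Set.mem_preimage]
    tauto
  calc |μ.real (S ∩ T ⁻¹' R) - μ.real (S' ∩ T ⁻¹' R')|
      ≤ μ.real ((S ∩ T ⁻¹' R) ∆ (S' ∩ T ⁻¹' R')) :=
        abs_measureReal_sub_le_measureReal_symmDiff
          (hS.inter (hT.measurable hR)).nullMeasurableSet
          (hS'.inter (hT.measurable hR')).nullMeasurableSet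
    _ ≤ μ.real (S ∆ S' ∪ T ⁻¹' (R ∆ R')) := measureReal_mono hsub
    _ ≤ μ.real (S ∆ S') + μ.real (T ⁻¹' (R ∆ R')) := measureReal_union_le _ _
    _ = μ.real (S ∆ S') + μ.real (R ∆ R') := by
        rw [hT.measureReal_preimage (hR.symmDiff hR').nullMeasurableSet]

lemma abs_measureReal_mul_sub_le [IsProbabilityMeasure μ] (hS : MeasurableSet S)
    (hS' : MeasurableSet S') (hR : MeasurableSet R) (hR' : MeasurableSet R') :
    |μ.real S * μ.real R - μ.real S' * μ.real R'| ≤ μ.real (S ∆ S') + μ.real (R ∆ R') := by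
  calc |μ.real S * μ.real R - μ.real S' * μ.real R'|
      = |(μ.real S - μ.real S') * μ.real R + μ.real S' * (μ.real R - μ.real R')| := by ring_nf
    _ ≤ |μ.real S - μ.real S'| * μ.real R + μ.real S' * |μ.real R - μ.real R'| := by
        refine (abs_add_le _ _).trans_eq ?_
        rw [abs_mul, abs_mul, abs_of_nonneg measureReal_nonneg, abs_of_nonneg measureReal_nonneg]
    _ ≤ |μ.real S - μ.real S'| * 1 + 1 * |μ.real R - μ.real R'| := by
        gcongr <;> exact measureReal_le_one
    _ ≤ μ.real (S ∆ S') + μ.real (R ∆ R') := by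
        rw [mul_one, one_mul]
        exact add_le_add
          (abs_measureReal_sub_le_measureReal_symmDiff hS.nullMeasurableSet hS'.nullMeasurableSet)
          (abs_measureReal_sub_le_measureReal_symmDiff hR.nullMeasurableSet hR'.nullMeasurableSet)

lemma eventually_le_sum_measureReal_inter_preimage_of_measureDense [IsProbabilityMeasure μ]
    (hT : MeasurePreserving T μ μ) (h𝒜 : μ.MeasureDense 𝒜) (hC : 0 ≤ C)
    (h : ∀ S ∈ 𝒜, ∀ R ∈ 𝒜, ∀ᶠ n in atTop,
      C * (μ.real S * μ.real R) ≤ ∑ i ∈ F, μ.real (S ∩ T^[n + i] ⁻¹' R))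
    (hS : MeasurableSet S) (hR : MeasurableSet R) {ε : ℝ} (hε : 0 < ε) :
    ∀ᶠ n in atTop,
      C * (μ.real S * μ.real R) - ε ≤ ∑ i ∈ F, μ.real (S ∩ T^[n + i] ⁻¹' R) := by
  set δ : ℝ := ε / (2 * (C + F.card) + 1)
  have hδ : 0 < δ := by positivity
  have hδε : C * (δ + δ) + F.card * (δ + δ) ≤ ε := by
    have : δ * (2 * (C + F.card) + 1) = ε := div_mul_cancel₀ _ (by positivity)
    linarith
  obtain ⟨S', hS', hSδ⟩ := exists_measureReal_symmDiff_lt_of_measureDense h𝒜 hS hδ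
  obtain ⟨R', hR', hRδ⟩ := exists_measureReal_symmDiff_lt_of_measureDense h𝒜 hR hδ
  have hmS := h𝒜.measurable S' hS'
  have hmR := h𝒜.measurable R' hR'
  have hprod : μ.real S * μ.real R ≤ μ.real S' * μ.real R' + (δ + δ) := by
    linarith [(abs_le.1 (abs_measureReal_mul_sub_le (μ := μ) hS hmS hR hmR)).2]
  filter_upwards [h S' hS' R' hR'] with n hn
  have hcorr : ∀ i ∈ F, μ.real (S' ∩ T^[n + i] ⁻¹' R') ≤
      μ.real (S ∩ T^[n + i] ⁻¹' R) + (δ + δ) := fun i _ => by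
    linarith [(abs_le.1
      (abs_measureReal_inter_preimage_sub_le (hT.iterate (n + i)) hS hmS hR hmR)).1]
  have hsum := Finset.sum_le_sum hcorr
  rw [Finset.sum_add_distrib, Finset.sum_const, nsmul_eq_mul] at hsum
  linarith [mul_le_mul_of_nonneg_left hprod hC]

lemma mul_le_liminf_of_measureDense [IsProbabilityMeasure μ]
    (hT : MeasurePreserving T μ μ) (h𝒜 : μ.MeasureDense 𝒜) (hC : 0 ≤ C)
    (h : ∀ S ∈ 𝒜, ∀ R ∈ 𝒜, ∀ᶠ n in atTop,
      C * (μ.real S * μ.real R) ≤ ∑ i ∈ F, μ.real (S ∩ T^[n + i] ⁻¹' R))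
    (hS : MeasurableSet S) (hR : MeasurableSet R) :
    C * (μ.real S * μ.real R) ≤
      liminf (fun n => ∑ i ∈ F, μ.real (S ∩ T^[n + i] ⁻¹' R)) atTop := by
  refine le_of_forall_pos_le_add fun ε hε => sub_le_iff_le_add.1 ?_
  refine le_liminf_of_le (IsBoundedUnder.isCoboundedUnder_ge ⟨∑ _i ∈ F, 1, ?_⟩)
    (eventually_le_sum_measureReal_inter_preimage_of_measureDense hT h𝒜 hC h hS hR hε)
  exact eventually_map.2 <| .of_forall fun _ => Finset.sum_le_sum fun _ _ => measureReal_le_one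

lemma ergodic_of_mul_le_liminf [IsFiniteMeasure μ] (hT : MeasurePreserving T μ μ) (hC : 0 < C)
    (h : ∀ S R, MeasurableSet S → MeasurableSet R → C * (μ.real S * μ.real R) ≤
      liminf (fun n => ∑ i ∈ F, μ.real (S ∩ T^[n + i] ⁻¹' R)) atTop) :
    Ergodic T μ := by
  refine ⟨hT, ⟨fun S hS hinv => eventuallyConst_set'.2 ?_⟩⟩
  have hcompl : ∀ k, T^[k] ⁻¹' Sᶜ = Sᶜ := fun k => by
    rw [Set.preimage_compl, Function.IsFixedPt.preimage_iterate hinv k]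
  have hle : C * (μ.real S * μ.real Sᶜ) ≤ 0 := by
    simpa [hcompl] using h S Sᶜ hS hS.compl
  have hzero : μ.real S * μ.real Sᶜ = 0 :=
    le_antisymm (nonpos_of_mul_nonpos_right hle hC) (by positivity)
  exact (mul_eq_zero.1 hzero).imp (fun h0 => ae_eq_empty.2 ((measureReal_eq_zero_iff).1 h0))
    fun h0 => ae_eq_univ.2 ((measureReal_eq_zero_iff).1 h0)

end DenseFamilies

section Cesaro

variable {l : Filter ℕ} {a : ℕ → ℕ → ℝ} {b t L : ℝ} {s : ℕ}

/-- Only the `2 s` terms closest to the ends of the average escape the bound `t`, and they are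
bounded below. -/
lemma le_of_tendsto_cesaro [NeBot l] (hl : l ≤ atTop) (hb : ∀ N i, b ≤ a N i)
    (ht : ∀ N i, s ≤ i → i + s ≤ N → t ≤ a N i)
    (hL : Tendsto (fun N : ℕ => (N : ℝ)⁻¹ * ∑ i ∈ Finset.range N, a N i) l (𝓝 L)) : t ≤ L := by
  have hlim : Tendsto (fun N : ℕ => t + 2 * s * (min b t - t) / N) l (𝓝 (t + 0)) :=
    (tendsto_const_nhds.add (tendsto_const_div_atTop_nhds_zero_nat _)).mono_left hl
  rw [add_zero] at hlim
  refine le_of_tendsto_of_tendsto hlim hL ?_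
  filter_upwards [hl (eventually_ge_atTop 1)] with N hN
  have hN0 : (0 : ℝ) < N := by exact_mod_cast hN
  have hterm : ∀ i ∈ Finset.range N,
      t + (if i < s ∨ N < i + s then min b t - t else 0) ≤ a N i := fun i _ => by
    split_ifs with hi
    · simpa using Or.inl (hb N i)
    · push Not at hi
      simpa using ht N i hi.1 hi.2
  have hends : ((Finset.range N).filter fun i => i < s ∨ N < i + s).card ≤ 2 * s := by
    refine (Finset.card_le_card (t := Finset.range s ∪ Finset.Ico (N - s) N) fun i => ?_).trans
      ((Finset.card_union_le _ _).trans ?_)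
    · simp only [Finset.mem_filter, Finset.mem_range, Finset.mem_union, Finset.mem_Ico]
      omega
    · simp only [Finset.card_range, Nat.card_Ico]
      omega
  have hends' : (2 * s : ℝ) * (min b t - t) ≤
      ((Finset.range N).filter fun i => i < s ∨ N < i + s).card * (min b t - t) :=
    mul_le_mul_of_nonpos_right (by exact_mod_cast hends) (sub_nonpos.2 (min_le_right b t))
  have hsum := Finset.sum_le_sum hterm
  rw [Finset.sum_add_distrib, ← Finset.sum_filter, Finset.sum_const, Finset.sum_const,
    Finset.card_range, nsmul_eq_mul, nsmul_eq_mul] at hsum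
  rw [inv_mul_eq_div, le_div_iff₀ hN0, add_mul, div_mul_cancel₀ _ hN0.ne']
  linarith

lemma tendsto_cesaro_le [NeBot l] (hl : l ≤ atTop) (hb : ∀ N i, a N i ≤ b)
    (ht : ∀ N i, s ≤ i → i + s ≤ N → a N i ≤ t)
    (hL : Tendsto (fun N : ℕ => (N : ℝ)⁻¹ * ∑ i ∈ Finset.range N, a N i) l (𝓝 L)) : L ≤ t := by
  refine neg_le_neg_iff.1 (le_of_tendsto_cesaro (a := fun N i => -a N i) (b := -b) (s := s) hl
    (fun N i => neg_le_neg (hb N i)) (fun N i hi hN => neg_le_neg (ht N i hi hN)) ?_)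
  simpa only [Finset.sum_neg_distrib, mul_neg] using hL.neg

lemma tendsto_cesaro_sub_succ (hl : l ≤ atTop) (hb : ∀ N i, |a N i| ≤ b) :
    Tendsto (fun N : ℕ => (N : ℝ)⁻¹ * ∑ i ∈ Finset.range N, (a N (i + 1) - a N i)) l (𝓝 0) := by
  refine squeeze_zero_norm (a := fun N : ℕ => (b + b) / N) (fun N => ?_)
    ((tendsto_const_div_atTop_nhds_zero_nat _).mono_left hl)
  rw [Finset.sum_range_sub, norm_mul, norm_inv, Real.norm_natCast, inv_mul_eq_div]
  gcongr
  exact (norm_sub_le _ _).trans (add_le_add (hb N N) (hb N 0))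

end Cesaro

section Cylinders

variable {A : Type}

lemma shiftMap_iterate_apply (k : ℕ) (x : ℕ → A) (n : ℕ) : shiftMap^[k] x n = x (n + k) := by
  induction k generalizing x with
  | zero => rfl
  | succ k ih => rw [Function.iterate_succ_apply, ih, shiftMap, add_assoc]

lemma mem_cyl {I : List A} {x : ℕ → A} : x ∈ cyl I ↔ ∀ i (h : i < I.length), x i = I[i] :=
  ⟨fun h i hi => h ⟨i, hi⟩, fun h i => h i i.2⟩

lemma mem_cyl_ofFn {n : ℕ} {w : Fin n → A} {x : ℕ → A} :
    x ∈ cyl (List.ofFn w) ↔ (fun i : Fin n => x i) = w := by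
  rw [mem_cyl, funext_iff]
  exact ⟨fun h i => by simpa using h i (by simp),
    fun h i hi => by simpa using h ⟨i, by simpa using hi⟩⟩

lemma cyl_append (I J : List A) : cyl (I ++ J) = cyl I ∩ shiftMap^[I.length] ⁻¹' cyl J := by
  ext x
  simp only [Set.mem_inter_iff, Set.mem_preimage, mem_cyl, shiftMap_iterate_apply,
    List.length_append]
  refine ⟨fun h => ⟨fun i hi => ?_, fun i hi => ?_⟩, fun ⟨hI, hJ⟩ i hi => ?_⟩
  · rw [h i (by omega), List.getElem_append_left]
  · rw [h (i + I.length) (by omega), List.getElem_append_right (by omega)]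
    simp
  · rcases lt_or_ge i I.length with hlt | hge
    · rw [hI i hlt, List.getElem_append_left]
    · have := hJ (i - I.length) (by omega)
      rwa [Nat.sub_add_cancel hge, ← List.getElem_append_right hge] at this

/-- The set of sequences whose initial word of length `m` lies in `W`: a finite disjoint union of
cylinders. -/
def blockSet {m : ℕ} (W : Finset (Fin m → A)) : Set (ℕ → A) := {x | (fun i : Fin m => x i) ∈ W}

@[simp]
lemma blockSet_univ [Fintype A] (m : ℕ) :
    blockSet (Finset.univ : Finset (Fin m → A)) = Set.univ := by
  simp [blockSet]

lemma cyl_eq_iInter (I : List A) :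
    cyl I = ⋂ i : Fin I.length, (fun x : ℕ → A => x i) ⁻¹' {I.get i} := by
  ext x
  simp [cyl]

section Topology

variable [TopologicalSpace A]

lemma continuous_shiftMap : Continuous (shiftMap : (ℕ → A) → ℕ → A) :=
  continuous_pi fun n => continuous_apply (n + 1)

lemma isClopen_cyl [DiscreteTopology A] (I : List A) : IsClopen (cyl I) := by
  rw [cyl_eq_iInter]
  exact isClopen_iInter_of_finite fun i => (isClopen_discrete _).preimage (continuous_apply _)

end Topology

variable [MeasurableSpace A]

lemma measurable_shiftMap : Measurable (shiftMap : (ℕ → A) → ℕ → A) :=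
  measurable_pi_lambda _ fun n => measurable_pi_apply (n + 1)

lemma exists_blockSet_eq_of_mem_measurableCylinders [Finite A] {S : Set (ℕ → A)}
    (hS : S ∈ measurableCylinders fun _ : ℕ => A) :
    ∃ m, ∃ W : Finset (Fin m → A), blockSet W = S := by
  simp only [measurableCylinders_nat, Set.mem_iUnion, Set.mem_singleton_iff] at hS
  obtain ⟨a, T, -, rfl⟩ := hS
  let init (x : ℕ → A) : Fin (a + 1) → A := fun i => x i
  refine ⟨a + 1, (Set.toFinite (init '' cylinder (Finset.Iic a) T)).toFinset, ?_⟩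
  ext x
  simp only [blockSet, Set.mem_ofPred_eq, Set.Finite.mem_toFinset, Set.mem_image, mem_cylinder]
  refine ⟨fun ⟨y, hy, hyx⟩ => ?_, fun hx => ⟨x, hx, rfl⟩⟩
  rwa [show (Finset.Iic a).restrict x = (Finset.Iic a).restrict y from
    funext fun i => (congrFun hyx ⟨i, Nat.lt_succ_of_le (Finset.mem_Iic.1 i.2)⟩).symm]

lemma measureDense_measurableCylinders (μ : Measure (ℕ → A)) [IsFiniteMeasure μ] :
    μ.MeasureDense (measurableCylinders fun _ : ℕ => A) :=
  .of_generateFrom_isSetAlgebra_finite μ isSetAlgebra_measurableCylinders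
    generateFrom_measurableCylinders.symm

variable [MeasurableSingletonClass A]

lemma measurableSet_cyl (I : List A) : MeasurableSet (cyl I) := by
  rw [cyl_eq_iInter]
  exact .iInter fun i => measurable_pi_apply _ (measurableSet_singleton _)

variable {μ ν : Measure (ℕ → A)} {F : Finset ℕ} {C : ℝ}

lemma measureReal_inter_preimage_blockSet (ν : Measure (ℕ → A)) [IsFiniteMeasure ν]
    (E : Set (ℕ → A)) (k : ℕ) {m : ℕ} (W : Finset (Fin m → A)) :
    ν.real (E ∩ shiftMap^[k] ⁻¹' blockSet W) =
      ∑ w ∈ W, ν.real (E ∩ shiftMap^[k] ⁻¹' cyl (List.ofFn w)) := by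
  let block (x : ℕ → A) : Fin m → A := fun i => shiftMap^[k] x i
  have hcyl : ∀ w, shiftMap^[k] ⁻¹' cyl (List.ofFn w) = block ⁻¹' {w} := fun w => by
    ext x
    exact mem_cyl_ofFn
  have hmeas : ∀ w, MeasurableSet (block ⁻¹' {w}) := fun w =>
    hcyl w ▸ measurable_shiftMap.iterate k (measurableSet_cyl _)
  have hW : MeasurableSet (block ⁻¹' W) := by
    rw [← Set.biUnion_preimage_singleton]
    exact Finset.measurableSet_biUnion W fun w _ => hmeas w
  have hsum := sum_measureReal_preimage_singleton (μ := ν.restrict E) W fun w _ => hmeas w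
  simp only [measureReal_restrict_apply (hmeas _), measureReal_restrict_apply hW,
    Set.inter_comm _ E] at hsum
  simp only [hcyl]
  exact hsum.symm

lemma measureReal_blockSet_inter (ν : Measure (ℕ → A)) [IsFiniteMeasure ν] {m : ℕ}
    (W : Finset (Fin m → A)) (E : Set (ℕ → A)) :
    ν.real (blockSet W ∩ E) = ∑ w ∈ W, ν.real (cyl (List.ofFn w) ∩ E) := by
  simpa only [Function.iterate_zero, Set.preimage_id, Set.inter_comm E] using
    measureReal_inter_preimage_blockSet ν E 0 W

lemma measureReal_blockSet (ν : Measure (ℕ → A)) [IsFiniteMeasure ν] {m : ℕ}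
    (W : Finset (Fin m → A)) : ν.real (blockSet W) = ∑ w ∈ W, ν.real (cyl (List.ofFn w)) := by
  simpa only [Set.inter_univ] using measureReal_blockSet_inter ν W Set.univ

lemma mul_measureReal_le_of_cyl [Finite A] [IsFiniteMeasure μ] [IsFiniteMeasure ν]
    (h : ∀ I, C * μ.real (cyl I) ≤ ν.real (cyl I)) {S : Set (ℕ → A)} (hS : MeasurableSet S) :
    C * μ.real S ≤ ν.real S := by
  refine mul_measureReal_le_of_measureDense (measureDense_measurableCylinders _)
    (fun S' hS' => ?_) hS
  obtain ⟨m, W, rfl⟩ := exists_blockSet_eq_of_mem_measurableCylinders hS'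
  rw [measureReal_blockSet, measureReal_blockSet, Finset.mul_sum]
  exact Finset.sum_le_sum fun w _ => h _

lemma eq_of_measureReal_cyl_eq [Finite A] [IsFiniteMeasure μ] [IsFiniteMeasure ν]
    (h : ∀ I, μ.real (cyl I) = ν.real (cyl I)) : μ = ν := by
  ext S hS
  have hle : 1 * μ.real S ≤ ν.real S := mul_measureReal_le_of_cyl (by simp [h]) hS
  have hge : 1 * ν.real S ≤ μ.real S := mul_measureReal_le_of_cyl (by simp [h]) hS
  rw [one_mul] at hle hge
  exact (measureReal_eq_measureReal_iff).1 (le_antisymm hle hge)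

lemma eventually_mul_le_sum_blockSet [IsFiniteMeasure μ]
    (h : ∀ I J, ∀ᶠ n in atTop, C * (μ.real (cyl I) * μ.real (cyl J)) ≤
      ∑ i ∈ F, μ.real (cyl I ∩ shiftMap^[n + i] ⁻¹' cyl J))
    {m k : ℕ} (W : Finset (Fin m → A)) (V : Finset (Fin k → A)) :
    ∀ᶠ n in atTop, C * (μ.real (blockSet W) * μ.real (blockSet V)) ≤
      ∑ i ∈ F, μ.real (blockSet W ∩ shiftMap^[n + i] ⁻¹' blockSet V) := by
  have hall : ∀ᶠ n in atTop, ∀ w ∈ W, ∀ v ∈ V,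
      C * (μ.real (cyl (List.ofFn w)) * μ.real (cyl (List.ofFn v))) ≤
        ∑ i ∈ F, μ.real (cyl (List.ofFn w) ∩ shiftMap^[n + i] ⁻¹' cyl (List.ofFn v)) := by
    simp only [eventually_all_finset]
    exact fun w _ v _ => h _ _
  filter_upwards [hall] with n hn
  calc C * (μ.real (blockSet W) * μ.real (blockSet V))
      = ∑ w ∈ W, ∑ v ∈ V, C * (μ.real (cyl (List.ofFn w)) * μ.real (cyl (List.ofFn v))) := by
        rw [measureReal_blockSet, measureReal_blockSet, Finset.sum_mul_sum]
        simp only [Finset.mul_sum]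
    _ ≤ ∑ w ∈ W, ∑ v ∈ V, ∑ i ∈ F,
          μ.real (cyl (List.ofFn w) ∩ shiftMap^[n + i] ⁻¹' cyl (List.ofFn v)) :=
        Finset.sum_le_sum fun w hw => Finset.sum_le_sum fun v hv => hn w hw v hv
    _ = ∑ i ∈ F, μ.real (blockSet W ∩ shiftMap^[n + i] ⁻¹' blockSet V) := by
        simp only [measureReal_blockSet_inter, measureReal_inter_preimage_blockSet,
          Finset.sum_comm (t := F)]
        exact Finset.sum_congr rfl fun i _ => Finset.sum_comm

lemma mul_le_liminf_of_cyl [Finite A] [IsProbabilityMeasure μ]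
    (hμ : MeasurePreserving shiftMap μ μ) (hC : 0 ≤ C)
    (h : ∀ I J, ∀ᶠ n in atTop, C * (μ.real (cyl I) * μ.real (cyl J)) ≤
      ∑ i ∈ F, μ.real (cyl I ∩ shiftMap^[n + i] ⁻¹' cyl J))
    {S R : Set (ℕ → A)} (hS : MeasurableSet S) (hR : MeasurableSet R) :
    C * (μ.real S * μ.real R) ≤
      liminf (fun n => ∑ i ∈ F, μ.real (S ∩ shiftMap^[n + i] ⁻¹' R)) atTop := by
  refine mul_le_liminf_of_measureDense hμ (measureDense_measurableCylinders μ) hC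
    (fun S' hS' R' hR' => ?_) hS hR
  obtain ⟨m, W, rfl⟩ := exists_blockSet_eq_of_mem_measurableCylinders hS'
  obtain ⟨k, V, rfl⟩ := exists_blockSet_eq_of_mem_measurableCylinders hR'
  exact eventually_mul_le_sum_blockSet h W V

variable [Fintype A]

lemma wordSum_measureReal_inter_preimage_cyl (ν : Measure (ℕ → A)) [IsFiniteMeasure ν]
    (E : Set (ℕ → A)) (k m : ℕ) :
    (wordSum m fun K => ν.real (E ∩ shiftMap^[k] ⁻¹' cyl K)) = ν.real E := by
  rw [wordSum, ← measureReal_inter_preimage_blockSet, blockSet_univ, Set.preimage_univ,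
    Set.inter_univ]

lemma wordSum_measureReal_cyl_append (ν : Measure (ℕ → A)) [IsFiniteMeasure ν] (m : ℕ)
    (I J : List A) :
    (wordSum m fun K => ν.real (cyl (I ++ K ++ J))) =
      ν.real (cyl I ∩ shiftMap^[I.length + m] ⁻¹' cyl J) := by
  rw [← wordSum_measureReal_inter_preimage_cyl ν _ I.length m]
  refine wordSum_congr fun K hK => ?_
  rw [cyl_append, cyl_append, List.length_append, hK, Set.inter_right_comm]

lemma fmn_measureReal_cyl (ν : Measure (ℕ → A)) [IsFiniteMeasure ν] (m n : ℕ) (I : List A) :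
    fmn (fun J => ν.real (cyl J)) m n I = ν.real (shiftMap^[m] ⁻¹' cyl I) := by
  have hright : ∀ u, (wordSum n fun v => ν.real (cyl (u ++ I ++ v))) = ν.real (cyl (u ++ I)) :=
    fun u => by
      simpa only [cyl_append (u ++ I)] using wordSum_measureReal_inter_preimage_cyl ν _ _ n
  rw [fmn_eq_wordSum, ← wordSum_measureReal_inter_preimage_cyl ν _ 0 m]
  refine wordSum_congr fun u hu => ?_
  rw [hright, cyl_append, hu, Set.inter_comm, Function.iterate_zero, Set.preimage_id]

end Cylinders

section AverageLimits

variable {A : Type} [MeasurableSpace A]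

/-- The average of the first `n` shifts of `η n`; the junk value `0⁻¹ = ∞` makes it the zero measure
for `n = 0`. -/
noncomputable def shiftAverage (η : ℕ → Measure (ℕ → A)) (n : ℕ) : Measure (ℕ → A) :=
  (n : ℝ≥0∞)⁻¹ • ∑ i ∈ Finset.range n, (η n).map shiftMap^[i]

/-- `f` gives the measures under `η n` of the cylinders over words of length `n`. -/
def Realizes (η : ℕ → Measure (ℕ → A)) (f : List A → ℝ) : Prop :=
  ∀ I, (η I.length).real (cyl I) = f I

/-- `μ` is the weak limit of the averages `shiftAverage η n` as `n → ∞` along the filter `l`, which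
may be the image of a subsequence or an ultrafilter. -/
structure IsAverageLimit [TopologicalSpace A] (η : ℕ → Measure (ℕ → A)) (l : Filter ℕ)
    (μ : Measure (ℕ → A)) : Prop where
  le_atTop : l ≤ atTop
  tendsto_integral : ∀ g : (ℕ → A) → ℝ, Continuous g →
    Tendsto (fun n => ∫ x, g x ∂shiftAverage η n) l (𝓝 (∫ x, g x ∂μ))

variable {f : List A → ℝ} {η : ℕ → Measure (ℕ → A)} {I : List A} {C : ℝ}

lemma isProbabilityMeasure_shiftAverage [∀ n, IsProbabilityMeasure (η n)] {n : ℕ} (hn : n ≠ 0) :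
    IsProbabilityMeasure (shiftAverage η n) := by
  have hmap : ∀ i, (η n).map shiftMap^[i] Set.univ = 1 := fun i => by
    rw [Measure.map_apply (measurable_shiftMap.iterate i) .univ, Set.preimage_univ, measure_univ]
  constructor
  simp [shiftAverage, hmap, ENNReal.inv_mul_cancel, hn]

lemma measureReal_shiftAverage [∀ n, IsFiniteMeasure (η n)] (n : ℕ) {S : Set (ℕ → A)}
    (hS : MeasurableSet S) :
    (shiftAverage η n).real S =
      (n : ℝ)⁻¹ * ∑ i ∈ Finset.range n, (η n).real (shiftMap^[i] ⁻¹' S) := by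
  have hmap : ∀ i, (η n).map shiftMap^[i] S = η n (shiftMap^[i] ⁻¹' S) := fun i =>
    Measure.map_apply (measurable_shiftMap.iterate i) hS
  simp [measureReal_def, shiftAverage, hmap, ENNReal.toReal_sum]

lemma Realizes.measureReal_preimage_cyl [Fintype A] [MeasurableSingletonClass A]
    [∀ n, IsFiniteMeasure (η n)] (hη : Realizes η f) {i N : ℕ} (hN : i + I.length ≤ N) :
    (η N).real (shiftMap^[i] ⁻¹' cyl I) = fmn f i (N - i - I.length) I := by
  rw [← fmn_measureReal_cyl (η N) i (N - i - I.length) I, fmn_eq_wordSum, fmn_eq_wordSum]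
  refine wordSum_congr fun u hu => wordSum_congr fun v hv => ?_
  rw [← hη, List.length_append, List.length_append, hu, hv]
  congr 2
  omega

lemma Realizes.fmn_le_one [Fintype A] [MeasurableSingletonClass A]
    [∀ n, IsProbabilityMeasure (η n)] (hη : Realizes η f) (m n : ℕ) (I : List A) :
    fmn f m n I ≤ 1 := by
  have h := hη.measureReal_preimage_cyl (I := I) (i := m) (N := m + I.length + n) (by omega)
  rw [show m + I.length + n - m - I.length = n by omega] at h
  exact h ▸ measureReal_le_one

lemma Realizes.fmn_le_fstar [Fintype A] [MeasurableSingletonClass A]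
    [∀ n, IsProbabilityMeasure (η n)] (hη : Realizes η f) (m n : ℕ) (I : List A) :
    fmn f m n I ≤ fstar f I := by
  have hle : ∀ m, ⨆ n, fmn f m n I ≤ 1 := fun m => ciSup_le fun n => hη.fmn_le_one m n I
  exact (le_ciSup ⟨1, Set.forall_mem_range.2 fun n => hη.fmn_le_one m n I⟩ n).trans
    (le_ciSup (f := fun m => ⨆ n, fmn f m n I) ⟨1, Set.forall_mem_range.2 hle⟩ m)

lemma mul_fmn_le_measureReal_cyl [Fintype A] [MeasurableSingletonClass A]
    {μ : Measure (ℕ → A)} [IsFiniteMeasure μ] (hμ : MeasurePreserving shiftMap μ μ)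
    (h : ∀ I, C * f I ≤ μ.real (cyl I)) (m n : ℕ) (I : List A) :
    C * fmn f m n I ≤ μ.real (cyl I) := by
  rw [← (hμ.iterate m).measureReal_preimage (measurableSet_cyl I).nullMeasurableSet,
    ← fmn_measureReal_cyl μ m n]
  simp only [fmn_eq_wordSum, mul_wordSum]
  exact wordSum_mono fun _ _ => wordSum_mono fun _ _ => h _

variable [TopologicalSpace A]

lemma exists_isAverageLimit [CompactSpace A] [SecondCountableTopology A] [T2Space A]
    [BorelSpace A] [∀ n, IsProbabilityMeasure (η n)] (U : Ultrafilter ℕ)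
    (hU : (U : Filter ℕ) ≤ atTop) :
    ∃ ν : ProbabilityMeasure (ℕ → A), IsAverageLimit η U (ν : Measure (ℕ → A)) := by
  let P (n : ℕ) : ProbabilityMeasure (ℕ → A) :=
    if hn : n = 0 then ⟨η 0, inferInstance⟩
    else ⟨shiftAverage η n, isProbabilityMeasure_shiftAverage hn⟩
  have hlim : Tendsto P U (𝓝 (U.map P).lim) := (U.map P).le_nhds_lim
  rw [ProbabilityMeasure.tendsto_iff_forall_integral_tendsto] at hlim
  refine ⟨_, hU, fun g hg => (hlim (.mkOfCompact ⟨g, hg⟩)).congr' ?_⟩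
  filter_upwards [hU (eventually_ne_atTop 0)] with n hn
  simp [P, hn]

lemma isAverageLimit_atTop_of_forall_eq [CompactSpace A] [SecondCountableTopology A] [T2Space A]
    [BorelSpace A] [∀ n, IsProbabilityMeasure (η n)] {μ : Measure (ℕ → A)}
    (h : ∀ (U : Ultrafilter ℕ) (ν : ProbabilityMeasure (ℕ → A)),
      IsAverageLimit η U (ν : Measure (ℕ → A)) → (ν : Measure (ℕ → A)) = μ) :
    IsAverageLimit η atTop μ := by
  refine ⟨le_rfl, fun g hg => (tendsto_iff_ultrafilter _ _ _).2 fun U hU => ?_⟩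
  obtain ⟨ν, hν⟩ := exists_isAverageLimit (η := η) U hU
  exact h U ν hν ▸ hν.tendsto_integral g hg

namespace IsAverageLimit

variable [DiscreteTopology A] [BorelSpace A] {μ ν : Measure (ℕ → A)} {l : Filter ℕ}
  [∀ n, IsProbabilityMeasure (η n)]

section Countable

variable [Countable A]

lemma tendsto_cesaro_measureReal (h : IsAverageLimit η l μ) {S : Set (ℕ → A)} (hS : IsClopen S) :
    Tendsto (fun N : ℕ => (N : ℝ)⁻¹ * ∑ i ∈ Finset.range N, (η N).real (shiftMap^[i] ⁻¹' S)) l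
      (𝓝 (μ.real S)) := by
  have hlim := h.tendsto_integral (S.indicator 1) (hS.continuous_indicator continuous_one)
  simpa only [integral_indicator_one hS.isOpen.measurableSet,
    measureReal_shiftAverage _ hS.isOpen.measurableSet] using hlim

lemma measureReal_preimage_shiftMap [NeBot l] (h : IsAverageLimit η l μ) {S : Set (ℕ → A)}
    (hS : IsClopen S) : μ.real (shiftMap ⁻¹' S) = μ.real S := by
  have hdiff := tendsto_cesaro_sub_succ (a := fun N i => (η N).real (shiftMap^[i] ⁻¹' S)) (b := 1)
    h.le_atTop fun N i => by rw [abs_of_nonneg measureReal_nonneg]; exact measureReal_le_one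
  refine sub_eq_zero.1 (tendsto_nhds_unique ?_ hdiff)
  refine ((h.tendsto_cesaro_measureReal (hS.preimage continuous_shiftMap)).sub
    (h.tendsto_cesaro_measureReal hS)).congr fun N => ?_
  simp only [Finset.sum_sub_distrib, mul_sub, Function.iterate_succ', Set.preimage_comp]

end Countable

lemma measurePreserving [Finite A] [NeBot l] [IsFiniteMeasure μ] (h : IsAverageLimit η l μ) :
    MeasurePreserving shiftMap μ μ := by
  refine ⟨measurable_shiftMap, eq_of_measureReal_cyl_eq fun I => ?_⟩
  rw [map_measureReal_apply measurable_shiftMap (measurableSet_cyl I)]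
  exact h.measureReal_preimage_shiftMap (isClopen_cyl I)

section Fintype

variable [Fintype A] [NeBot l] {p : ℕ} {E t : ℝ}

lemma mul_fmn_le (h : IsAverageLimit η l μ) (hη : Realizes η f) (hE : QuasiMonotone p E f)
    (m n : ℕ) (I : List A) : E * fmn f m n I ≤ μ.real (cyl I) := by
  refine le_of_tendsto_cesaro (s := m + n + p + I.length) h.le_atTop
    (fun N i => measureReal_nonneg) (fun N i hi hN => ?_)
    (h.tendsto_cesaro_measureReal (isClopen_cyl I))
  rw [hη.measureReal_preimage_cyl (by omega)]
  exact hE (by omega) (by omega) I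

lemma measureReal_cyl_le (h : IsAverageLimit η l μ) (hη : Realizes η f)
    (ht : ∀ m n, fmn f m n I ≤ t) : μ.real (cyl I) ≤ t := by
  refine tendsto_cesaro_le (s := I.length) h.le_atTop (fun N i => measureReal_le_one)
    (fun N i _ hN => ?_) (h.tendsto_cesaro_measureReal (isClopen_cyl I))
  rw [hη.measureReal_preimage_cyl hN]
  exact ht _ _

lemma exists_fstar_bounds (h : IsAverageLimit η l μ) (hη : Realizes η f)
    (hf : OmegaW p f ∨ OmegaS p f) :
    ∃ C > 0, ∀ I, C * fstar f I ≤ μ.real (cyl I) ∧ μ.real (cyl I) ≤ fstar f I := by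
  obtain ⟨E, hE, hEf⟩ := exists_quasiMonotone hf
  exact ⟨E, hE, fun I => ⟨mul_fstar_le hE.le fun m n => h.mul_fmn_le hη hEf m n I,
    h.measureReal_cyl_le hη fun m n => hη.fmn_le_fstar m n I⟩⟩

lemma exists_mul_le (h : IsAverageLimit η l μ) (hη : Realizes η f)
    (hf : OmegaW p f ∨ OmegaS p f) : ∃ C > 0, ∀ I, C * f I ≤ μ.real (cyl I) := by
  obtain ⟨E, hE, hEf⟩ := exists_quasiMonotone hf
  exact ⟨E, hE, fun I => by simpa only [fmn_zero_zero] using h.mul_fmn_le hη hEf 0 0 I⟩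

end Fintype

lemma mul_measureReal_cyl_le [Finite A] [NeBot l] [IsFiniteMeasure ν] (h : IsAverageLimit η l μ)
    (hη : Realizes η f) (hν : MeasurePreserving shiftMap ν ν) (hC : 0 < C)
    (hCf : ∀ I, C * f I ≤ ν.real (cyl I)) (I : List A) :
    C * μ.real (cyl I) ≤ ν.real (cyl I) := by
  cases nonempty_fintype A
  exact (le_div_iff₀' hC).1 <| h.measureReal_cyl_le hη fun m n =>
    (le_div_iff₀' hC).2 (mul_fmn_le_measureReal_cyl hν hCf m n I)

lemma eq_of_ergodic [Finite A] [NeBot l] [IsProbabilityMeasure μ] [IsProbabilityMeasure ν]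
    (h : IsAverageLimit η l μ) (hη : Realizes η f) (hν : Ergodic shiftMap ν) (hC : 0 < C)
    (hCf : ∀ I, C * f I ≤ ν.real (cyl I)) : μ = ν := by
  refine hν.eq_of_absolutelyContinuous h.measurePreserving (.mk fun S hS hνS => ?_)
  have hle : C * μ.real S ≤ 0 := by
    simpa only [measureReal_def, hνS, ENNReal.toReal_zero] using mul_measureReal_le_of_cyl
      (h.mul_measureReal_cyl_le hη hν.toMeasurePreserving hC hCf) hS
  exact (measureReal_eq_zero_iff).1
    (le_antisymm (nonpos_of_mul_nonpos_right hle hC) measureReal_nonneg)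

variable [Fintype A] [NeBot l] {F : Finset ℕ} {p : ℕ} {c E : ℝ}

lemma exists_half_le_fmn (h : IsAverageLimit η l μ) (hη : Realizes η f) (hf : ∀ I, 0 ≤ f I)
    (I : List A) : ∃ m n, μ.real (cyl I) / 2 ≤ fmn f m n I := by
  by_contra! hlt
  have hle := h.measureReal_cyl_le hη fun m n => (hlt m n).le
  linarith [hlt 0 0, fmn_nonneg hf 0 0 I]

lemma mul_sum_wordSum_fmn_le [IsFiniteMeasure μ] (h : IsAverageLimit η l μ) (hη : Realizes η f)
    (hE : QuasiMonotone p E f) (m n q r : ℕ) (I J : List A) :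
    (E * ∑ i ∈ F, wordSum (n + i + q) fun K => fmn f m r (I ++ K ++ J)) ≤
      ∑ i ∈ F, μ.real (cyl I ∩ shiftMap^[I.length + n + q + i] ⁻¹' cyl J) := by
  rw [Finset.mul_sum]
  refine Finset.sum_le_sum fun i _ => ?_
  rw [show I.length + n + q + i = I.length + (n + i + q) by ring, mul_wordSum,
    ← wordSum_measureReal_cyl_append]
  exact wordSum_mono fun K _ => h.mul_fmn_le hη hE m r _

lemma eventually_mul_le_sum_cyl [IsFiniteMeasure μ] (h : IsAverageLimit η l μ)
    (hη : Realizes η f) (hf : ∀ I, 0 ≤ f I) (hE : 0 < E) (hEf : QuasiMonotone p E f) (hc : 0 < c)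
    (hF : GapSupermul F c f) (I J : List A) :
    ∀ᶠ n in atTop, c * E ^ 2 / 4 * (μ.real (cyl I) * μ.real (cyl J)) ≤
      ∑ i ∈ F, μ.real (cyl I ∩ shiftMap^[n + i] ⁻¹' cyl J) := by
  obtain ⟨m, n, hI⟩ := h.exists_half_le_fmn hη hf I
  obtain ⟨m', n', hJ⟩ := h.exists_half_le_fmn hη hf J
  filter_upwards [eventually_ge_atTop (I.length + n + (m' + p))] with k hk
  obtain ⟨q, rfl⟩ := Nat.exists_eq_add_of_le (show I.length + n ≤ k by omega)
  calc c * E ^ 2 / 4 * (μ.real (cyl I) * μ.real (cyl J))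
      = E * (c * (μ.real (cyl I) / 2 * (E * (μ.real (cyl J) / 2)))) := by ring
    _ ≤ E * (c * (fmn f m n I * (E * fmn f m' n' J))) := by
        gcongr
        exact fmn_nonneg hf m n I
    _ ≤ E * (c * (fmn f m n I * fmn f q (n' + p) J)) := by
        gcongr
        · exact fmn_nonneg hf m n I
        · exact hEf (by omega) le_rfl J
    _ ≤ E * ∑ i ∈ F, wordSum (n + i + q) fun K => fmn f m (n' + p) (I ++ K ++ J) := by
        gcongr
        exact hF.mul_fmn_le m n q (n' + p) I J
    _ ≤ ∑ i ∈ F, μ.real (cyl I ∩ shiftMap^[I.length + n + q + i] ⁻¹' cyl J) :=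
        h.mul_sum_wordSum_fmn_le hη hEf m n q (n' + p) I J

variable [IsProbabilityMeasure μ]

lemma exists_mul_le_liminf (h : IsAverageLimit η l μ) (hη : Realizes η f)
    (hf : OmegaW p f ∨ OmegaS p f) (hF : ∃ c > 0, GapSupermul F c f) :
    ∃ C > 0, ∀ S R, MeasurableSet S → MeasurableSet R → C * (μ.real S * μ.real R) ≤
      liminf (fun n => ∑ i ∈ F, μ.real (S ∩ shiftMap^[n + i] ⁻¹' R)) atTop := by
  obtain ⟨E, hE, hEf⟩ := exists_quasiMonotone hf
  obtain ⟨c, hc, hFc⟩ := hF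
  exact ⟨c * E ^ 2 / 4, by positivity, fun S R => mul_le_liminf_of_cyl h.measurePreserving
    (by positivity)
    (h.eventually_mul_le_sum_cyl hη (hf.elim OmegaW.nonneg OmegaS.nonneg) hE hEf hc hFc)⟩

lemma ergodic (h : IsAverageLimit η l μ) (hη : Realizes η f) (hf : OmegaW p f ∨ OmegaS p f) :
    Ergodic shiftMap μ := by
  obtain ⟨C, hC, hmix⟩ := h.exists_mul_le_liminf hη hf (exists_gapSupermul hf)
  exact ergodic_of_mul_le_liminf h.measurePreserving hC hmix

lemma isAverageLimit_atTop (h : IsAverageLimit η l μ) (hη : Realizes η f)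
    (hf : OmegaW p f ∨ OmegaS p f) : IsAverageLimit η atTop μ := by
  obtain ⟨C, hC, hCf⟩ := h.exists_mul_le hη hf
  exact isAverageLimit_atTop_of_forall_eq fun U ν hν =>
    hν.eq_of_ergodic hη (h.ergodic hη hf) hC hCf

lemma exists_mul_le_liminf_of_omegaS (h : IsAverageLimit η l μ) (hη : Realizes η f)
    (hf : OmegaS p f) :
    ∃ C > 0, ∀ S R, MeasurableSet S → MeasurableSet R → C * (μ.real S * μ.real R) ≤
      liminf (fun n => μ.real (S ∩ shiftMap^[n] ⁻¹' R)) atTop := by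
  obtain ⟨C, hC, hmix⟩ := h.exists_mul_le_liminf hη (.inr hf) hf.exists_gapSupermul
  refine ⟨C, hC, fun S R hS hR => ?_⟩
  simpa only [Finset.sum_singleton, liminf_nat_add (fun n => μ.real (S ∩ shiftMap^[n] ⁻¹' R)) p]
    using hmix S R hS hR

end IsAverageLimit

end AverageLimits

/-- Proposition 4.1 / `pro-t1`: the ergodic measure associated with a function
`f ∈ Ω_w(A*,p) ∪ Ω(A*,p)` on the full shift, with its Gibbs-type bounds, mixing-type bounds
and uniqueness properties. -/
theorem weighted_eq_states_stmt_9 {A : Type} [Fintype A] [TopologicalSpace A]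
    [DiscreteTopology A] [MeasurableSpace A] [BorelSpace A]
    (p : ℕ) (f : List A → ℝ) (hf : OmegaW p f ∨ OmegaS p f)
    (η : ℕ → Measure (ℕ → A)) (hηP : ∀ n, IsProbabilityMeasure (η n))
    (hηf : ∀ n : ℕ, ∀ w : Fin n → A, ((η n) (cyl (List.ofFn w))).toReal = f (List.ofFn w))
    (μseq : ℕ → Measure (ℕ → A))
    (hμseq : ∀ n, μseq n = (n : ℝ≥0∞)⁻¹ • ∑ i ∈ Finset.range n, (η n).map (shiftMap^[i]))
    (ns : ℕ → ℕ) (hns : StrictMono ns)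
    (μ : Measure (ℕ → A)) (hμP : IsProbabilityMeasure μ)
    (hconv : ∀ g : (ℕ → A) → ℝ, Continuous g →
      Tendsto (fun i : ℕ => ∫ x, g x ∂(μseq (ns i))) atTop (nhds (∫ x, g x ∂μ))) :
    μ.map shiftMap = μ ∧
    (∃ C₁ > (0:ℝ), ∀ I : List A,
      C₁ * fstar f I ≤ (μ (cyl I)).toReal ∧ (μ (cyl I)).toReal ≤ fstar f I) ∧
    (∃ C₂ > (0:ℝ), ∀ S T : Set (ℕ → A), MeasurableSet S → MeasurableSet T →
      C₂ * ((μ S).toReal * (μ T).toReal) ≤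
        liminf (fun n : ℕ => ∑ i ∈ Finset.range (p+1),
          (μ (S ∩ shiftMap^[n+i] ⁻¹' T)).toReal) atTop) ∧
    Ergodic shiftMap μ ∧
    ((∃ C₃ > (0:ℝ), ∀ I : List A, C₃ * f I ≤ (μ (cyl I)).toReal) ∧
      (∀ μ' : Measure (ℕ → A), IsProbabilityMeasure μ' → μ'.map shiftMap = μ' →
        Ergodic shiftMap μ' →
        (∃ C₃ > (0:ℝ), ∀ I : List A, C₃ * f I ≤ (μ' (cyl I)).toReal) → μ' = μ)) ∧
    (∀ g : (ℕ → A) → ℝ, Continuous g →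
      Tendsto (fun n : ℕ => ∫ x, g x ∂(μseq n)) atTop (nhds (∫ x, g x ∂μ))) ∧
    (OmegaS p f → ∃ C₄ > (0:ℝ), ∀ S T : Set (ℕ → A), MeasurableSet S → MeasurableSet T →
      C₄ * ((μ S).toReal * (μ T).toReal) ≤
        liminf (fun n : ℕ => (μ (S ∩ shiftMap^[n] ⁻¹' T)).toReal) atTop) := by
  obtain rfl : μseq = shiftAverage η := funext hμseq
  have hη : Realizes η f := fun I => by
    simpa only [List.ofFn_get, measureReal_def] using hηf I.length I.get
  have h : IsAverageLimit η (map ns atTop) μ :=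
    ⟨hns.tendsto_atTop, fun g hg => tendsto_map'_iff.2 (hconv g hg)⟩
  refine ⟨h.measurePreserving.map_eq, h.exists_fstar_bounds hη hf,
    h.exists_mul_le_liminf hη hf (exists_gapSupermul hf), h.ergodic hη hf,
    ⟨h.exists_mul_le hη hf, ?_⟩, (h.isAverageLimit_atTop hη hf).tendsto_integral,
    h.exists_mul_le_liminf_of_omegaS hη⟩
  rintro μ' hμ' - hergodic ⟨C, hC, hCf⟩
  exact (h.eq_of_ergodic hη hergodic hC hCf).symm
end

section
/- Let (X, σ_X) be a one-sided subshift over a finite alphabet A, p ∈ ℕ, and φ ∈ D_w(X, p). Define f : A* → [0,1] by f(I) = φ(I) / Σ_{J ∈ L_n(X)} φ(J) for I ∈ L_n(X), n ≥ 0, and f(I) = 0 for I ∈ A* \ L(X). Then f ∈ Ω_w(A*, p), and there is a constant c > 0 with f(IJ) ≤ c f(I) f(J) for all I, J ∈ A*. Moreover, if φ ∈ D(X, p), then f ∈ Ω(A*, p). -/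
open MeasureTheory Filter Topology
open scoped Classical ENNReal NNReal

/-! Extend `φ` by zero to a weight `g` on all words, and let `Z n` be the total weight of the words
of length `n`. Submultiplicativity of `g` gives `Z (n + m) ≤ C * Z n * Z m`; summing the gluing
condition over both words and absorbing the gap words by submultiplicativity gives
`c * (Z n * Z m) ≤ C' * Z (n + m)`. Hence `Z` is multiplicative up to constants, and inequalities
for `g` pass to its normalization. For (H3), glue a fixed nonempty word of positive weight to `I`
and cut off everything but the letter next to `I`: the part removed has bounded length, so its
weight is bounded. -/

section Weight

variable {A : Type*} {g : List A → ℝ} {C c : ℝ} {S : Finset ℕ}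

/-- Nonnegative weights on words that are submultiplicative under concatenation up to the positive
constant `C`; on the full language this is condition (1) in the definition of `D_w` with
`C = c⁻¹`. -/
structure QuasiSubmultiplicative (C : ℝ) (g : List A → ℝ) : Prop where
  const_pos : 0 < C
  nonneg : ∀ I, 0 ≤ g I
  append_le : ∀ I J, g (I ++ J) ≤ C * g I * g J

/-- Any two words can be glued by a gap word with length in `S`, at the cost of the factor `c` in
weight. Conditions (H2) and (A2) are the cases `S = Finset.Iic p` and `S = {p}`. -/
def HasGluing (S : Finset ℕ) (c : ℝ) (g : List A → ℝ) : Prop :=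
  ∀ I J, ∃ K : List A, K.length ∈ S ∧ c * (g I * g J) ≤ g (I ++ K ++ J)

theorem QuasiSubmultiplicative.comp_reverse (hg : QuasiSubmultiplicative C g) :
    QuasiSubmultiplicative C (g ∘ List.reverse) where
  const_pos := hg.const_pos
  nonneg I := hg.nonneg I.reverse
  append_le I J := by
    simpa only [Function.comp_apply, List.reverse_append, mul_right_comm]
      using hg.append_le J.reverse I.reverse

theorem HasGluing.nonempty (hglue : HasGluing S c g) : S.Nonempty :=
  let ⟨K, hK, _⟩ := hglue [] []
  ⟨K.length, hK⟩

theorem HasGluing.comp_reverse (hglue : HasGluing S c g) : HasGluing S c (g ∘ List.reverse) := by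
  intro I J
  obtain ⟨K, hK, hle⟩ := hglue J.reverse I.reverse
  refine ⟨K.reverse, by simpa only [List.length_reverse] using hK, ?_⟩
  simpa only [Function.comp_apply, List.reverse_append, List.reverse_reverse, List.append_assoc,
    mul_comm] using hle

theorem QuasiSubmultiplicative.nil_pos (hg : QuasiSubmultiplicative C g) {I : List A}
    (hI : 0 < g I) : 0 < g [] := by
  have hprod : 0 < C * g I * g [] :=
    hI.trans_le (by simpa only [List.append_nil] using hg.append_le I [])
  exact pos_of_mul_pos_right hprod (mul_nonneg hg.const_pos.le hI.le)

theorem exists_weight_le_of_length_le [Finite A] (g : List A → ℝ) (N : ℕ) :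
    ∃ M > 0, ∀ I : List A, I.length ≤ N → g I ≤ M := by
  obtain ⟨M, hM⟩ := ((List.finite_length_le A N).image g).bddAbove
  exact ⟨max M 1, by positivity, fun I hI =>
    (hM (Set.mem_image_of_mem g hI)).trans (le_max_left M 1)⟩

theorem QuasiSubmultiplicative.exists_append_singleton [Finite A]
    (hg : QuasiSubmultiplicative C g) (hglue : HasGluing S c g) (hc : 0 < c)
    (hpos : ∃ W ≠ [], 0 < g W) :
    ∃ d > 0, ∀ I, ∃ j, d * g I ≤ g (I ++ [j]) := by
  obtain ⟨W, hW, hgW⟩ := hpos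
  have hC := hg.const_pos
  obtain ⟨M, hM, hgM⟩ := exists_weight_le_of_length_le g (S.sup id + W.length)
  refine ⟨c * g W / (C * M), by positivity, fun I => ?_⟩
  obtain ⟨K, hK, hle⟩ := hglue I W
  obtain ⟨j, L, hjL⟩ := List.exists_cons_of_ne_nil (List.append_ne_nil_of_right_ne_nil K hW)
  have hL : L.length ≤ S.sup id + W.length := by
    have hKS : K.length ≤ S.sup id := Finset.le_sup (f := id) hK
    have hlen := congrArg List.length hjL
    simp only [List.length_append, List.length_cons] at hlen
    omega
  refine ⟨j, ?_⟩
  rw [div_mul_eq_mul_div, div_le_iff₀ (by positivity)]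
  calc c * g W * g I = c * (g I * g W) := by ring
    _ ≤ g (I ++ [j] ++ L) := by simpa [hjL] using hle
    _ ≤ C * g (I ++ [j]) * g L := hg.append_le _ _
    _ ≤ C * g (I ++ [j]) * M :=
        mul_le_mul_of_nonneg_left (hgM L hL) (mul_nonneg hC.le (hg.nonneg _))
    _ = g (I ++ [j]) * (C * M) := by ring

theorem QuasiSubmultiplicative.exists_cons [Finite A]
    (hg : QuasiSubmultiplicative C g) (hglue : HasGluing S c g) (hc : 0 < c)
    (hpos : ∃ W ≠ [], 0 < g W) :
    ∃ d > 0, ∀ I, ∃ i, d * g I ≤ g (i :: I) := by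
  have hpos' : ∃ W ≠ [], 0 < (g ∘ List.reverse) W := by
    obtain ⟨W, hW, hgW⟩ := hpos
    exact ⟨W.reverse, by simpa using hW, by simpa using hgW⟩
  obtain ⟨d, hd, hext⟩ := hg.comp_reverse.exists_append_singleton hglue.comp_reverse hc hpos'
  exact ⟨d, hd, fun I => by simpa using hext I.reverse⟩

theorem QuasiSubmultiplicative.exists_length_eq_pos [Finite A]
    (hg : QuasiSubmultiplicative C g) (hglue : HasGluing S c g) (hc : 0 < c)
    (hpos : ∃ W ≠ [], 0 < g W) (n : ℕ) : ∃ I : List A, I.length = n ∧ 0 < g I := by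
  obtain ⟨d, hd, hext⟩ := hg.exists_append_singleton hglue hc hpos
  induction n with
  | zero =>
    obtain ⟨W, -, hgW⟩ := hpos
    exact ⟨[], rfl, hg.nil_pos hgW⟩
  | succ n ih =>
    obtain ⟨I, rfl, hI⟩ := ih
    obtain ⟨j, hj⟩ := hext I
    exact ⟨I ++ [j], List.length_append, (mul_pos hd hI).trans_le hj⟩

section PartitionSum

variable [Fintype A]

/-- The partition function of `g` at length `n`, i.e. the total weight of the words of length `n`;
these are indexed as in the classes `OmegaW` and `OmegaS`. -/
def partitionSum (g : List A → ℝ) (n : ℕ) : ℝ :=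
  ∑ w : Fin n → A, g (List.ofFn w)

theorem partitionSum_add (g : List A → ℝ) (n m : ℕ) :
    partitionSum g (n + m) =
      ∑ u : Fin n → A, ∑ v : Fin m → A, g (List.ofFn u ++ List.ofFn v) := by
  rw [partitionSum, ← Fintype.sum_prod_type', ← (Fin.appendEquiv n m).sum_comp]
  simp only [Fin.appendEquiv, Equiv.coe_fn_mk, List.ofFn_fin_append]

theorem partitionSum_add_add (g : List A → ℝ) (n k m : ℕ) :
    partitionSum g (n + k + m) = ∑ u : Fin n → A, ∑ w : Fin m → A, ∑ v : Fin k → A,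
      g (List.ofFn u ++ List.ofFn v ++ List.ofFn w) := by
  rw [add_assoc, partitionSum_add]
  refine Finset.sum_congr rfl fun u _ => ?_
  rw [Finset.sum_comm]
  simpa only [partitionSum, List.append_assoc] using
    partitionSum_add (fun L => g (List.ofFn u ++ L)) k m

theorem partitionSum_nonneg (hg : ∀ I, 0 ≤ g I) (n : ℕ) : 0 ≤ partitionSum g n :=
  Finset.sum_nonneg fun _ _ => hg _

theorem le_partitionSum (hg : ∀ I, 0 ≤ g I) (I : List A) : g I ≤ partitionSum g I.length := by
  simpa only [partitionSum, List.ofFn_get] using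
    Finset.single_le_sum (f := fun w : Fin I.length → A => g (List.ofFn w))
      (fun _ _ => hg _) (Finset.mem_univ I.get)

theorem QuasiSubmultiplicative.partitionSum_add_le (hg : QuasiSubmultiplicative C g) (n m : ℕ) :
    partitionSum g (n + m) ≤ C * partitionSum g n * partitionSum g m := by
  calc partitionSum g (n + m)
      = ∑ u : Fin n → A, ∑ v : Fin m → A, g (List.ofFn u ++ List.ofFn v) := partitionSum_add g n m
    _ ≤ ∑ u : Fin n → A, ∑ v : Fin m → A, C * g (List.ofFn u) * g (List.ofFn v) := by
        gcongr
        exact hg.append_le _ _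
    _ = C * partitionSum g n * partitionSum g m := by
        simp only [partitionSum, mul_assoc, Finset.sum_mul_sum, ← Finset.mul_sum]

theorem HasGluing.mul_le_sum (hglue : HasGluing S c g) (hg : ∀ I, 0 ≤ g I) (I J : List A) :
    c * (g I * g J) ≤ ∑ k ∈ S, ∑ v : Fin k → A, g (I ++ List.ofFn v ++ J) := by
  obtain ⟨K, hK, hle⟩ := hglue I J
  calc c * (g I * g J) ≤ g (I ++ List.ofFn K.get ++ J) := by rwa [List.ofFn_get]
    _ ≤ ∑ v : Fin K.length → A, g (I ++ List.ofFn v ++ J) :=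
        Finset.single_le_sum (f := fun v : Fin K.length → A => g (I ++ List.ofFn v ++ J))
          (fun _ _ => hg _) (Finset.mem_univ K.get)
    _ ≤ ∑ k ∈ S, ∑ v : Fin k → A, g (I ++ List.ofFn v ++ J) :=
        Finset.single_le_sum (f := fun k => ∑ v : Fin k → A, g (I ++ List.ofFn v ++ J))
          (fun _ _ => Finset.sum_nonneg fun _ _ => hg _) hK

theorem HasGluing.mul_partitionSum_le_sum (hglue : HasGluing S c g) (hg : ∀ I, 0 ≤ g I)
    (n m : ℕ) :
    c * (partitionSum g n * partitionSum g m) ≤ ∑ k ∈ S, partitionSum g (n + k + m) := by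
  calc c * (partitionSum g n * partitionSum g m)
      = ∑ u : Fin n → A, ∑ w : Fin m → A, c * (g (List.ofFn u) * g (List.ofFn w)) := by
        simp only [partitionSum, Finset.sum_mul_sum, ← Finset.mul_sum]
    _ ≤ ∑ u : Fin n → A, ∑ w : Fin m → A, ∑ k ∈ S, ∑ v : Fin k → A,
          g (List.ofFn u ++ List.ofFn v ++ List.ofFn w) := by
        gcongr
        exact hglue.mul_le_sum hg _ _
    _ = ∑ k ∈ S, ∑ u : Fin n → A, ∑ w : Fin m → A, ∑ v : Fin k → A,
          g (List.ofFn u ++ List.ofFn v ++ List.ofFn w) :=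
        (Finset.sum_congr rfl fun _ _ => Finset.sum_comm).trans Finset.sum_comm
    _ = ∑ k ∈ S, partitionSum g (n + k + m) := by simp only [partitionSum_add_add]

theorem QuasiSubmultiplicative.mul_partitionSum_le (hg : QuasiSubmultiplicative C g)
    (hglue : HasGluing S c g) (n m : ℕ) :
    c * (partitionSum g n * partitionSum g m) ≤
      C * (∑ k ∈ S, partitionSum g k) * partitionSum g (n + m) := by
  calc c * (partitionSum g n * partitionSum g m)
      ≤ ∑ k ∈ S, partitionSum g (n + k + m) := hglue.mul_partitionSum_le_sum hg.nonneg n m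
    _ = ∑ k ∈ S, partitionSum g (k + (n + m)) := by simp only [add_comm n, add_assoc]
    _ ≤ ∑ k ∈ S, C * partitionSum g k * partitionSum g (n + m) := by
        gcongr
        exact hg.partitionSum_add_le _ _
    _ = C * (∑ k ∈ S, partitionSum g k) * partitionSum g (n + m) := by
        rw [Finset.mul_sum, Finset.sum_mul]

theorem QuasiSubmultiplicative.partitionSum_pos (hg : QuasiSubmultiplicative C g)
    (hglue : HasGluing S c g) (hc : 0 < c) (hpos : ∃ W ≠ [], 0 < g W) (n : ℕ) :
    0 < partitionSum g n := by
  obtain ⟨I, rfl, hI⟩ := hg.exists_length_eq_pos hglue hc hpos n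
  exact hI.trans_le (le_partitionSum hg.nonneg I)

theorem QuasiSubmultiplicative.partitionSum_add_add_le (hg : QuasiSubmultiplicative C g)
    {k : ℕ} (hk : k ∈ S) (n m : ℕ) :
    partitionSum g (n + k + m) ≤
      C ^ 2 * (∑ k ∈ S, partitionSum g k) * (partitionSum g n * partitionSum g m) := by
  have hC := hg.const_pos
  have hZ := partitionSum_nonneg hg.nonneg
  have hZn := hZ n
  have hZm := hZ m
  have hkS : partitionSum g k ≤ ∑ k ∈ S, partitionSum g k :=
    Finset.single_le_sum (fun i _ => hZ i) hk
  calc partitionSum g (n + k + m)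
      ≤ C * partitionSum g (n + k) * partitionSum g m := hg.partitionSum_add_le _ _
    _ ≤ C * (C * partitionSum g n * partitionSum g k) * partitionSum g m := by
        gcongr
        exact hg.partitionSum_add_le _ _
    _ = C ^ 2 * partitionSum g k * (partitionSum g n * partitionSum g m) := by ring
    _ ≤ C ^ 2 * (∑ k ∈ S, partitionSum g k) * (partitionSum g n * partitionSum g m) := by gcongr

/-- The weight `g` rescaled to total weight one on each word length; it is zero on the lengths
where the total weight of `g` vanishes. -/
noncomputable def normalizedWeight (g : List A → ℝ) (I : List A) : ℝ :=
  g I / partitionSum g I.length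

theorem normalizedWeight_nonneg (hg : ∀ I, 0 ≤ g I) (I : List A) : 0 ≤ normalizedWeight g I :=
  div_nonneg (hg I) (partitionSum_nonneg hg _)

theorem normalizedWeight_le_one (hg : ∀ I, 0 ≤ g I) (I : List A) : normalizedWeight g I ≤ 1 :=
  div_le_one_of_le₀ (le_partitionSum hg I) (partitionSum_nonneg hg _)

theorem sum_normalizedWeight {n : ℕ} (hn : partitionSum g n ≠ 0) :
    ∑ w : Fin n → A, normalizedWeight g (List.ofFn w) = 1 := by
  simp only [normalizedWeight, List.length_ofFn]
  rw [← Finset.sum_div]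
  exact div_self hn

theorem QuasiSubmultiplicative.normalizedWeight_append_le (hg : QuasiSubmultiplicative C g)
    (hglue : HasGluing S c g) (hc : 0 < c) (hZ : ∀ n, 0 < partitionSum g n) (I J : List A) :
    normalizedWeight g (I ++ J) ≤
      C ^ 2 * (∑ k ∈ S, partitionSum g k) / c * (normalizedWeight g I * normalizedWeight g J) := by
  have hC := hg.const_pos
  have hI := hg.nonneg I
  have hJ := hg.nonneg J
  have hZI := hZ I.length
  have hZJ := hZ J.length
  simp only [normalizedWeight, List.length_append]
  rw [div_mul_div_comm, div_mul_div_comm, div_le_div_iff₀ (hZ _) (by positivity)]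
  calc g (I ++ J) * (c * (partitionSum g I.length * partitionSum g J.length))
      ≤ C * g I * g J *
          (C * (∑ k ∈ S, partitionSum g k) * partitionSum g (I.length + J.length)) := by
        exact mul_le_mul (hg.append_le I J) (hg.mul_partitionSum_le hglue _ _)
          (by positivity) (by positivity)
    _ = C ^ 2 * (∑ k ∈ S, partitionSum g k) * (g I * g J) *
          partitionSum g (I.length + J.length) := by ring

theorem QuasiSubmultiplicative.exists_normalizedWeight_append_le
    (hg : QuasiSubmultiplicative C g) (hglue : HasGluing S c g) (hc : 0 < c)
    (hZ : ∀ n, 0 < partitionSum g n) :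
    ∃ d > 0, ∀ I J,
      normalizedWeight g (I ++ J) ≤ d * (normalizedWeight g I * normalizedWeight g J) := by
  have hC := hg.const_pos
  have hU : 0 < ∑ k ∈ S, partitionSum g k := Finset.sum_pos (fun k _ => hZ k) hglue.nonempty
  exact ⟨_, by positivity, hg.normalizedWeight_append_le hglue hc hZ⟩

theorem QuasiSubmultiplicative.hasGluing_normalizedWeight (hg : QuasiSubmultiplicative C g)
    (hglue : HasGluing S c g) (hZ : ∀ n, 0 < partitionSum g n) :
    HasGluing S (c / (C ^ 2 * ∑ k ∈ S, partitionSum g k)) (normalizedWeight g) := by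
  intro I J
  obtain ⟨K, hK, hle⟩ := hglue I J
  refine ⟨K, hK, ?_⟩
  simp only [normalizedWeight, List.length_append]
  rw [div_mul_div_comm, div_mul_div_comm]
  exact div_le_div₀ (hg.nonneg _) hle (hZ _) (hg.partitionSum_add_add_le hK _ _)

theorem QuasiSubmultiplicative.exists_hasGluing_normalizedWeight
    (hg : QuasiSubmultiplicative C g) (hglue : HasGluing S c g) (hc : 0 < c)
    (hZ : ∀ n, 0 < partitionSum g n) : ∃ d > 0, HasGluing S d (normalizedWeight g) := by
  have hC := hg.const_pos
  have hU : 0 < ∑ k ∈ S, partitionSum g k := Finset.sum_pos (fun k _ => hZ k) hglue.nonempty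
  exact ⟨_, by positivity, hg.hasGluing_normalizedWeight hglue hZ⟩

theorem QuasiSubmultiplicative.mul_normalizedWeight_le_of_length_eq_succ
    (hg : QuasiSubmultiplicative C g) (hZ : ∀ n, 0 < partitionSum g n) {d : ℝ} {I J : List A}
    (hlen : J.length = I.length + 1) (hle : d * g I ≤ g J) :
    d / (C * partitionSum g 1) * normalizedWeight g I ≤ normalizedWeight g J := by
  rw [normalizedWeight, normalizedWeight, div_mul_div_comm, hlen, add_comm]
  exact div_le_div₀ (hg.nonneg J) hle (hZ _) (hg.partitionSum_add_le _ _)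

theorem QuasiSubmultiplicative.exists_normalizedWeight_extension
    (hg : QuasiSubmultiplicative C g) (hglue : HasGluing S c g) (hc : 0 < c)
    (hpos : ∃ W ≠ [], 0 < g W) :
    ∃ d > 0, ∀ I, ∃ i j, d * normalizedWeight g I ≤ normalizedWeight g (i :: I) ∧
      d * normalizedWeight g I ≤ normalizedWeight g (I ++ [j]) := by
  have hZ := hg.partitionSum_pos hglue hc hpos
  obtain ⟨a, ha, hcons⟩ := hg.exists_cons hglue hc hpos
  obtain ⟨b, hb, hsnoc⟩ := hg.exists_append_singleton hglue hc hpos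
  refine ⟨min a b / (C * partitionSum g 1),
    div_pos (lt_min ha hb) (mul_pos hg.const_pos (hZ 1)), fun I => ?_⟩
  obtain ⟨i, hi⟩ := hcons I
  obtain ⟨j, hj⟩ := hsnoc I
  exact ⟨i, j,
    hg.mul_normalizedWeight_le_of_length_eq_succ hZ List.length_cons
      ((mul_le_mul_of_nonneg_right (min_le_left a b) (hg.nonneg I)).trans hi),
    hg.mul_normalizedWeight_le_of_length_eq_succ hZ List.length_append
      ((mul_le_mul_of_nonneg_right (min_le_right a b) (hg.nonneg I)).trans hj)⟩

end PartitionSum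

section Indicator

variable {L : Set (List A)} {φ : List A → ℝ}

theorem quasiSubmultiplicative_indicator (hL : ∀ I J, I ++ J ∈ L → I ∈ L ∧ J ∈ L) (hC : 0 < C)
    (hφ : ∀ I ∈ L, 0 ≤ φ I) (happend : ∀ I J, I ++ J ∈ L → φ (I ++ J) ≤ C * φ I * φ J) :
    QuasiSubmultiplicative C (L.indicator φ) where
  const_pos := hC
  nonneg := Set.indicator_nonneg hφ
  append_le I J := by
    by_cases hIJ : I ++ J ∈ L
    · simpa only [Set.indicator_of_mem, hIJ, hL I J hIJ] using happend I J hIJ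
    · rw [Set.indicator_of_notMem hIJ]
      exact mul_nonneg (mul_nonneg hC.le (Set.indicator_nonneg hφ I)) (Set.indicator_nonneg hφ J)

theorem hasGluing_indicator [Nonempty A] (hS : S.Nonempty) (hφ : ∀ I ∈ L, 0 ≤ φ I)
    (hglue : ∀ I J, I ∈ L → J ∈ L →
      ∃ K : List A, K.length ∈ S ∧ I ++ K ++ J ∈ L ∧ c * (φ I * φ J) ≤ φ (I ++ K ++ J)) :
    HasGluing S c (L.indicator φ) := by
  intro I J
  by_cases hIJ : I ∈ L ∧ J ∈ L
  · obtain ⟨K, hK, hmem, hle⟩ := hglue I J hIJ.1 hIJ.2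
    exact ⟨K, hK, by simpa only [Set.indicator_of_mem, hIJ, hmem] using hle⟩
  · obtain ⟨k, hk⟩ := hS
    refine ⟨List.replicate k (Classical.arbitrary A), by rwa [List.length_replicate], ?_⟩
    have hzero : L.indicator φ I * L.indicator φ J = 0 := by
      rw [not_and_or] at hIJ
      exact mul_eq_zero.2 (hIJ.imp (Set.indicator_of_notMem · φ) (Set.indicator_of_notMem · φ))
    rw [hzero, mul_zero]
    exact Set.indicator_nonneg hφ _

end Indicator

end Weight

section Subshift

variable {A : Type} {X : Set (ℕ → A)} {φ : List A → ℝ} {p : ℕ}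

theorem mem_cyl_cons {a : A} {I : List A} {x : ℕ → A} :
    x ∈ cyl (a :: I) ↔ x 0 = a ∧ shiftMap x ∈ cyl I :=
  Fin.forall_fin_succ

theorem mem_cyl_append {I J : List A} {x : ℕ → A} :
    x ∈ cyl (I ++ J) ↔ x ∈ cyl I ∧ shiftMap^[I.length] x ∈ cyl J := by
  induction I generalizing x with
  | nil => simp [cyl]
  | cons a I ih =>
    rw [List.cons_append, mem_cyl_cons, mem_cyl_cons, ih, and_assoc, List.length_cons,
      Function.iterate_succ_apply]

theorem Lang.of_append (hX : shiftMap '' X ⊆ X) {I J : List A} (h : Lang X (I ++ J)) :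
    Lang X I ∧ Lang X J := by
  obtain ⟨x, hx, hxX⟩ := h
  obtain ⟨hI, hJ⟩ := mem_cyl_append.1 hx
  exact ⟨⟨x, hI, hxX⟩, ⟨_, hJ, (Set.mapsTo_iff_image_subset.2 hX).iterate _ hxX⟩⟩

theorem exists_ne_nil_indicator_pos (hφ : ∃ I, Lang X I ∧ I ≠ [] ∧ 0 < φ I) :
    ∃ W ≠ [], 0 < {I | Lang X I}.indicator φ W := by
  obtain ⟨W, hW, hne, hpos⟩ := hφ
  exact ⟨W, hne, by rwa [Set.indicator_of_mem (show W ∈ {I | Lang X I} from hW)]⟩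

theorem Dw.exists_hasGluing_indicator (hX : shiftMap '' X ⊆ X) (hφ : Dw X p φ) :
    ∃ c > 0, QuasiSubmultiplicative c⁻¹ ({I | Lang X I}.indicator φ) ∧
      HasGluing (Finset.Iic p) c ({I | Lang X I}.indicator φ) := by
  obtain ⟨hnonneg, ⟨W, -, hW, -⟩, c, hc, -, happend, hglue⟩ := hφ
  have : Nonempty A := ⟨W.head hW⟩
  exact ⟨c, hc,
    quasiSubmultiplicative_indicator (fun _ _ => Lang.of_append hX) (inv_pos.2 hc) hnonneg happend,
    hasGluing_indicator Finset.nonempty_Iic hnonneg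
      (by simpa only [Finset.mem_Iic, Set.mem_ofPred_eq] using hglue)⟩

theorem Ds.exists_hasGluing_indicator (hX : shiftMap '' X ⊆ X) (hφ : Ds X p φ) :
    ∃ c > 0, QuasiSubmultiplicative c⁻¹ ({I | Lang X I}.indicator φ) ∧
      HasGluing {p} c ({I | Lang X I}.indicator φ) := by
  obtain ⟨hnonneg, ⟨W, -, hW, -⟩, c, hc, -, happend, hglue⟩ := hφ
  have : Nonempty A := ⟨W.head hW⟩
  exact ⟨c, hc,
    quasiSubmultiplicative_indicator (fun _ _ => Lang.of_append hX) (inv_pos.2 hc) hnonneg happend,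
    hasGluing_indicator (Finset.singleton_nonempty p) hnonneg
      (by simpa only [Finset.mem_singleton, Set.mem_ofPred_eq] using hglue)⟩

variable [Fintype A] {g : List A → ℝ} {C c : ℝ}

theorem QuasiSubmultiplicative.omegaW_normalizedWeight (hg : QuasiSubmultiplicative C g)
    (hglue : HasGluing (Finset.Iic p) c g) (hc : 0 < c) (hpos : ∃ W ≠ [], 0 < g W) :
    OmegaW p (normalizedWeight g) := by
  have hZ := hg.partitionSum_pos hglue hc hpos
  have hnonneg := normalizedWeight_nonneg hg.nonneg
  obtain ⟨a, ha, hgap⟩ := hg.exists_hasGluing_normalizedWeight hglue hc hZ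
  obtain ⟨b, hb, hext⟩ := hg.exists_normalizedWeight_extension hglue hc hpos
  refine ⟨fun I => ⟨hnonneg I, normalizedWeight_le_one hg.nonneg I⟩, min a b, lt_min ha hb,
    fun n => sum_normalizedWeight (hZ n).ne', fun I J => ?_, fun I => ?_⟩
  · obtain ⟨K, hK, hle⟩ := hgap I J
    exact ⟨K, Finset.mem_Iic.1 hK, (mul_le_mul_of_nonneg_right (min_le_left a b)
      (mul_nonneg (hnonneg I) (hnonneg J))).trans hle⟩
  · obtain ⟨i, j, hi, hj⟩ := hext I
    have hmin := mul_le_mul_of_nonneg_right (min_le_right a b) (hnonneg I)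
    exact ⟨i, j, hmin.trans hi, hmin.trans hj⟩

theorem QuasiSubmultiplicative.omegaS_normalizedWeight (hg : QuasiSubmultiplicative C g)
    (hglue : HasGluing {p} c g) (hc : 0 < c) (hpos : ∃ W ≠ [], 0 < g W) :
    OmegaS p (normalizedWeight g) := by
  have hZ := hg.partitionSum_pos hglue hc hpos
  obtain ⟨d, hd, hgap⟩ := hg.exists_hasGluing_normalizedWeight hglue hc hZ
  refine ⟨fun I => ⟨normalizedWeight_nonneg hg.nonneg I, normalizedWeight_le_one hg.nonneg I⟩,
    d, hd, fun n => sum_normalizedWeight (hZ n).ne', ?_⟩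
  simpa only [HasGluing, Finset.mem_singleton] using hgap

theorem normalizedWeight_indicator_lang (X : Set (ℕ → A)) (φ : List A → ℝ) (I : List A) :
    normalizedWeight ({I | Lang X I}.indicator φ) I =
      if Lang X I then
        φ I / (∑ w : Fin I.length → A, if Lang X (List.ofFn w) then φ (List.ofFn w) else 0)
      else 0 := by
  simp only [normalizedWeight, partitionSum, Set.indicator_apply, Set.mem_ofPred_eq, ite_div,
    zero_div]

theorem weighted_eq_states_stmt_13_general
    (X : Set (ℕ → A)) (hX : shiftMap '' X ⊆ X) (p : ℕ) (φ : List A → ℝ) (hφ : Dw X p φ)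
    (f : List A → ℝ)
    (hfdef : ∀ I : List A, f I =
      if Lang X I then
        φ I / (∑ w : Fin I.length → A, if Lang X (List.ofFn w) then φ (List.ofFn w) else 0)
      else 0) :
    OmegaW p f ∧ (∃ c > (0:ℝ), ∀ I J : List A, f (I ++ J) ≤ c * (f I * f J)) ∧
      (Ds X p φ → OmegaS p f) := by
  obtain rfl : f = normalizedWeight ({I | Lang X I}.indicator φ) :=
    funext fun I => (hfdef I).trans (normalizedWeight_indicator_lang X φ I).symm
  have hpos := exists_ne_nil_indicator_pos hφ.2.1
  obtain ⟨c, hc, hg, hglue⟩ := hφ.exists_hasGluing_indicator hX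
  refine ⟨hg.omegaW_normalizedWeight hglue hc hpos,
    hg.exists_normalizedWeight_append_le hglue hc (hg.partitionSum_pos hglue hc hpos),
    fun hφs => ?_⟩
  obtain ⟨c', hc', hg', hglue'⟩ := hφs.exists_hasGluing_indicator hX
  exact hg'.omegaS_normalizedWeight hglue' hc' hpos

end Subshift

/-- Lemma 5.3 / `lem-dir`: normalizing `φ ∈ D_w(X,p)` over each length and
extending by `0` off the language yields `f ∈ Ω_w(A*,p)` with `f(IJ) ≼ f(I)f(J)`; if
`φ ∈ D(X,p)` then moreover `f ∈ Ω(A*,p)`. -/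
theorem weighted_eq_states_stmt_13 {A : Type} [Fintype A] [TopologicalSpace A]
    [DiscreteTopology A]
    (X : Set (ℕ → A)) (hX : IsSubshift X) (p : ℕ) (φ : List A → ℝ) (hφ : Dw X p φ)
    (f : List A → ℝ)
    (hfdef : ∀ I : List A, f I =
      if Lang X I then
        φ I / (∑ w : Fin I.length → A, if Lang X (List.ofFn w) then φ (List.ofFn w) else 0)
      else 0) :
    OmegaW p f ∧ (∃ c > (0:ℝ), ∀ I J : List A, f (I ++ J) ≤ c * (f I * f J)) ∧
      (Ds X p φ → OmegaS p f) :=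
  weighted_eq_states_stmt_13_general X hX.2.2 p φ hφ f hfdef
end
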